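/- arXiv:2007.09591 — 2 statements merged into one kernel-verified Lean document; each statement's English description precedes it below -/
import Mathlib

section
/- There is an absolute constant C such that the following holds. Let l ∈ ℝ² with |l| = 1, λ > 0 with λl ∈ ℤ², and 10 ≤ μ ≤ λ/2. Let b₀ : 𝕋² → ℝ be smooth with Fourier support contained in {|k| ≤ μ}. Then: ‖T^{(1)}_{λl} b₀‖_∞ ≤ C λ^{−1} μ² ‖b₀‖_∞; ‖T^{(2)}_{λl} b₀‖_∞ ≤ C λ^{−2} μ³ ‖b₀‖_∞; and ‖Δ^{−1}∇ T^{(2)}_{λl} b₀‖_X ≤ C ‖b₀‖_∞ λ^{−2} μ² log μ, where the X-norm of the vector Δ^{−1}∇ T^{(2)}_{λl} b₀ is the sum of the X-norms of its two components. -/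
open MeasureTheory Complex Filter
open scoped ENNReal NNReal

noncomputable section

abbrev Z2 := ℤ × ℤ

/-- dot product of an integer frequency with a point of `ℝ²` -/
def dotZ (k : Z2) (x : ℝ × ℝ) : ℝ := (k.1 : ℝ) * x.1 + (k.2 : ℝ) * x.2

/-- Euclidean norm of an integer frequency -/
def knorm (k : Z2) : ℝ := Real.sqrt ((k.1 : ℝ) ^ 2 + (k.2 : ℝ) ^ 2)

/-- Euclidean norm on `ℝ²` (realized as `ℝ × ℝ`) -/
def e2 (x : ℝ × ℝ) : ℝ := Real.sqrt (x.1 ^ 2 + x.2 ^ 2)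

/-- the fundamental domain `[-π, π]²` of the torus -/
def Q2 : Set (ℝ × ℝ) := Set.Icc (-Real.pi, -Real.pi) (Real.pi, Real.pi)

/-- `2π`-periodicity in both variables -/
def Periodic2 (f : ℝ × ℝ → ℂ) : Prop :=
  ∀ x : ℝ × ℝ, f (x.1 + 2 * Real.pi, x.2) = f x ∧ f (x.1, x.2 + 2 * Real.pi) = f x

def RealValued (f : ℝ × ℝ → ℂ) : Prop := ∀ x, (f x).im = 0

/-- Fourier coefficient `f̂(k) = (2π)⁻² ∫_{𝕋²} f(x) e^{-ik⋅x} dx` -/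
def fCoeff (f : ℝ × ℝ → ℂ) (k : Z2) : ℂ :=
  (1 / (2 * Real.pi) ^ 2 : ℂ) * ∫ x in Q2, f x * Complex.exp (-Complex.I * (dotZ k x : ℝ))

/-- Fourier multiplier operator with symbol `m` -/
def Tmult (m : Z2 → ℂ) (f : ℝ × ℝ → ℂ) : ℝ × ℝ → ℂ :=
  fun x => ∑' k : Z2, m k * fCoeff f k * Complex.exp (Complex.I * (dotZ k x : ℝ))

/-- `Λ^s = (-Δ)^{s/2}`, the multiplier with symbol `|k|^s` (killing `k = 0` for `s ≤ 0`) -/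
def Lam (s : ℝ) : (ℝ × ℝ → ℂ) → (ℝ × ℝ → ℂ) :=
  Tmult fun k => if k = 0 then 0 else ((knorm k ^ s : ℝ) : ℂ)

/-- symbol of the Riesz transform `R_j`, `i k_j / |k|` -/
def rieszSym (j : Fin 2) (k : Z2) : ℂ :=
  if k = 0 then 0
  else Complex.I * ((if j = 0 then (k.1 : ℝ) else (k.2 : ℝ)) : ℂ) / ((knorm k : ℝ) : ℂ)

/-- the Riesz transform `R_j` -/
def Riesz (j : Fin 2) : (ℝ × ℝ → ℂ) → (ℝ × ℝ → ℂ) := Tmult (rieszSym j)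

/-- symbol of the modified Riesz-type transforms `R_j^o` of Lemma 2.2 -/
def RoSym (j : Fin 2) (k : Z2) : ℝ :=
  if k = 0 then 0
  else if j = 0 then 25 * ((k.2 : ℝ) ^ 2 - (k.1 : ℝ) ^ 2) / (12 * ((k.1 : ℝ) ^ 2 + (k.2 : ℝ) ^ 2))
  else 7 * ((k.2 : ℝ) ^ 2 - (k.1 : ℝ) ^ 2) / (12 * ((k.1 : ℝ) ^ 2 + (k.2 : ℝ) ^ 2))
      + 4 * (k.1 : ℝ) * (k.2 : ℝ) / ((k.1 : ℝ) ^ 2 + (k.2 : ℝ) ^ 2)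

/-- the Riesz-type transforms `R_j^o` -/
def Ro (j : Fin 2) : (ℝ × ℝ → ℂ) → (ℝ × ℝ → ℂ) := Tmult fun k => ((RoSym j k : ℝ) : ℂ)

/-- symbol of `Δ⁻¹` (mean annihilated) -/
def deltaInvSym (k : Z2) : ℂ := if k = 0 then 0 else -1 / ((knorm k ^ 2 : ℝ) : ℂ)

/-- directional derivative `(v ⋅ ∇) f` -/
def dirD (v : ℝ × ℝ) (f : ℝ × ℝ → ℂ) : ℝ × ℝ → ℂ := fun x => fderiv ℝ f x v

/-- partial derivative `∂_j f` -/
def pd (j : Fin 2) (f : ℝ × ℝ → ℂ) : ℝ × ℝ → ℂ :=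
  dirD (if j = 0 then ((1 : ℝ), (0 : ℝ)) else ((0 : ℝ), (1 : ℝ))) f

/-- sup norm on the torus -/
def supNorm (f : ℝ × ℝ → ℂ) : ℝ := ⨆ x : ℝ × ℝ, ‖f x‖

/-- the `X`-norm `‖q‖_X = ‖q‖_∞ + ‖R₁^o q‖_∞ + ‖R₂^o q‖_∞` -/
def Xnorm (q : ℝ × ℝ → ℂ) : ℝ := supNorm q + supNorm (Ro 0 q) + supNorm (Ro 1 q)

/-- the vectors `l₁ = (3/5, 4/5)` and `l₂ = (1,0)` -/
def l1 : ℝ × ℝ := (3 / 5, 4 / 5)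
def l2 : ℝ × ℝ := (1, 0)

/-- the rotation `l ↦ l^⊥` -/
def perp (l : ℝ × ℝ) : ℝ × ℝ := (-l.2, l.1)

/-- symbol view of frequencies as real vectors -/
def toR (k : Z2) : ℝ × ℝ := ((k.1 : ℝ), (k.2 : ℝ))

/-- the operator `T^{(1)}_{λl}` (where `κ = λl ∈ ℤ²`) -/
def T1op (κ : Z2) (lam : ℝ) : (ℝ × ℝ → ℂ) → (ℝ × ℝ → ℂ) :=
  Tmult fun k => (((knorm (κ + k) + knorm (κ - k)) / 2 - lam : ℝ) : ℂ)

/-- the operator `T^{(2)}_{λl}` (where `κ = λl ∈ ℤ²`) -/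
def T2op (κ : Z2) (l : ℝ × ℝ) : (ℝ × ℝ → ℂ) → (ℝ × ℝ → ℂ) :=
  Tmult fun k =>
    Complex.I * (((knorm (κ + k) - knorm (κ - k)) / 2 - (l.1 * (k.1 : ℝ) + l.2 * (k.2 : ℝ)) : ℝ) : ℂ)

/-- the functions `a_j = 2 √(r/den) √(C₀ + R_j^o q / r)` -/
def aPerf (q : ℝ × ℝ → ℂ) (r den C₀ : ℝ) (j : Fin 2) : ℝ × ℝ → ℂ :=
  fun x => ((2 * Real.sqrt (r / den) * Real.sqrt (C₀ + (Ro j q x).re / r) : ℝ) : ℂ)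

/-- `λ_n = ⌈λ₀^{bⁿ}⌉` -/
def lamSeq (lam0 : ℕ) (b : ℝ) (n : ℕ) : ℕ := ⌈((lam0 : ℝ)) ^ (b ^ n)⌉₊

/-- `r_n = λ_n^{-β}` -/
def rSeq (lam0 : ℕ) (b β : ℝ) (n : ℕ) : ℝ := ((lamSeq lam0 b n : ℝ)) ^ (-β)

/-- `μ_{n+1} = (λ_n λ_{n+1})^{1/2}` -/
def muSeq (lam0 : ℕ) (b : ℝ) (n : ℕ) : ℝ :=
  Real.sqrt ((lamSeq lam0 b n : ℝ) * (lamSeq lam0 b (n + 1) : ℝ))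

/-- smooth Fourier cutoff `P_{≤μ}` associated to a bump `ψ` -/
def Pcut (ψ : ℝ × ℝ → ℝ) (μ : ℝ) : (ℝ × ℝ → ℂ) → (ℝ × ℝ → ℂ) :=
  Tmult fun k => ((ψ ((k.1 : ℝ) / μ, (k.2 : ℝ) / μ) : ℝ) : ℂ)

/-- bilinear multiplier with symbol the Fourier transform of a kernel `K ∈ L¹(ℝ²×ℝ²)` -/
def mOf (K : (ℝ × ℝ) × (ℝ × ℝ) → ℂ) (ξ η : ℝ × ℝ) : ℂ :=
  ∫ z : (ℝ × ℝ) × (ℝ × ℝ),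
    K z * Complex.exp (-Complex.I * ((ξ.1 * z.1.1 + ξ.2 * z.1.2 + η.1 * z.2.1 + η.2 * z.2.2 : ℝ) : ℂ))

/-- the bilinear multiplier operator associated to a kernel `K ∈ L¹(ℝ²×ℝ²)` -/
def Tbil (K : (ℝ × ℝ) × (ℝ × ℝ) → ℂ) (f g : ℝ × ℝ → ℂ) : ℝ × ℝ → ℂ :=
  fun x => ∑' k : Z2,
    (∑' k' : Z2, mOf K (toR k') (toR (k - k')) * fCoeff f k' * fCoeff g (k - k'))
      * Complex.exp (Complex.I * (dotZ k x : ℝ))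

/-- Fourier coefficients of the commutator `[R_j, φ]θ`, computed from those of `φ` and `θ` -/
def commCoeff (j : Fin 2) (φh c : Z2 → ℂ) (k : Z2) : ℂ :=
  ∑' k' : Z2, (rieszSym j k - rieszSym j k') * φh (k - k') * c k'


/-
A function with Fourier support in `{|k| ≤ μ}` is a trigonometric polynomial, so every estimate is a
bound for the norm of a multiplier on such polynomials. These norms are subadditive,
submultiplicative and stable under limits and averages, and by the sharp Bernstein inequality the
linear symbol `k⋅v` with `|v| = 1` has norm at most `μ`. As `μ ≤ λ/2`, the symbols `a = (k⋅l)/λ` and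
`b = (k⋅l^⊥)/λ` have norm at most `1/2`. Now `|λl ± k| = λ √((1 ± a)² + b²)`, where
`√(A² + b²) = A + b² / (√(A² + b²) + A)` and the last fraction is the limit of the convergents of
`1 / (2A + b² / (2A + ⋯))`, whose norms stay at most `2` for `A = 1 ± a`. Hence the symbols of
`T^{(1)}` and `T^{(2)}` are `λ⁻¹ (k⋅l^⊥)²` and `λ⁻² (k⋅l) (k⋅l^⊥)²` times symbols of bounded norm.
For the third estimate, the symbol of `Δ⁻¹ ∂_e T^{(2)}` is, up to a bounded factor,
`λ⁻² (k⋅l^⊥)` times `(k⋅e) (k⋅l) (k⋅l^⊥) / |k|²`, and splitting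
`1/|k|² = ∫₀^∞ 3 e^{-3t|k|²} dt` at `t = μ⁻²` shows that a cubic symbol over `|k|²` has norm `O(μ)`.
The symbols of `R_j^o` are quadratic over `|k|²` and are absorbed in the same way by the spare
factor `k⋅l^⊥`. No logarithm is lost.
-/

open scoped Topology Real

section TrigonometricPolynomials

/-- The character `x ↦ e^{ik⋅x}` of the torus. -/
def fourierMode (k : Z2) (x : ℝ × ℝ) : ℂ := Complex.exp (Complex.I * (dotZ k x : ℝ))

/-- The trigonometric polynomial with spectrum in `S` and coefficients `a`. The values of `a` off
`S` are irrelevant, so that multipliers and coefficients can be functions on all of `ℤ²`. -/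
def trigPoly (S : Finset Z2) (a : Z2 → ℂ) (x : ℝ × ℝ) : ℂ := ∑ k ∈ S, a k * fourierMode k x

lemma norm_fourierMode (k : Z2) (x : ℝ × ℝ) : ‖fourierMode k x‖ = 1 := by
  rw [fourierMode, mul_comm, Complex.norm_exp_ofReal_mul_I]

lemma dotZ_neg_right (k : Z2) (x : ℝ × ℝ) : dotZ k (-x) = -dotZ k x := by
  simp only [dotZ, Prod.fst_neg, Prod.snd_neg]; ring

lemma dotZ_smul (k : Z2) (t : ℝ) (x : ℝ × ℝ) : dotZ k (t • x) = t * dotZ k x := by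
  simp only [dotZ, Prod.smul_fst, Prod.smul_snd, smul_eq_mul]; ring

lemma fourierMode_add (k : Z2) (x y : ℝ × ℝ) :
    fourierMode k (x + y) = fourierMode k x * fourierMode k y := by
  rw [fourierMode, fourierMode, fourierMode, ← Complex.exp_add]
  congr 1
  simp only [dotZ, Prod.fst_add, Prod.snd_add]
  push_cast
  ring

lemma continuous_fourierMode (k : Z2) : Continuous (fourierMode k) := by
  unfold fourierMode dotZ
  fun_prop

lemma continuous_trigPoly (S : Finset Z2) (a : Z2 → ℂ) : Continuous (trigPoly S a) :=
  continuous_finsetSum S fun k _ => continuous_const.mul (continuous_fourierMode k)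

lemma periodic2_fourierMode (k : Z2) : Periodic2 (fourierMode k) := by
  intro x
  unfold fourierMode dotZ
  constructor <;> rw [Complex.exp_eq_exp_iff_exists_int]
  · exact ⟨k.1, by push_cast; ring⟩
  · exact ⟨k.2, by push_cast; ring⟩

lemma periodic2_trigPoly (S : Finset Z2) (a : Z2 → ℂ) : Periodic2 (trigPoly S a) := fun x =>
  ⟨Finset.sum_congr rfl fun k _ => by rw [(periodic2_fourierMode k x).1],
    Finset.sum_congr rfl fun k _ => by rw [(periodic2_fourierMode k x).2]⟩

lemma supNorm_nonneg (f : ℝ × ℝ → ℂ) : 0 ≤ supNorm f := Real.iSup_nonneg fun _ => norm_nonneg _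

lemma norm_trigPoly_le_supNorm (S : Finset Z2) (a : Z2 → ℂ) (x : ℝ × ℝ) :
    ‖trigPoly S a x‖ ≤ supNorm (trigPoly S a) := by
  refine le_ciSup (f := fun x => ‖trigPoly S a x‖) ⟨∑ k ∈ S, ‖a k‖, ?_⟩ x
  rintro _ ⟨y, rfl⟩
  refine norm_sum_le_of_le S fun k _ => ?_
  rw [norm_mul, norm_fourierMode, mul_one]

lemma hasFDerivAt_fourierMode (k : Z2) (x : ℝ × ℝ) :
    HasFDerivAt (fourierMode k)
      (fourierMode k x • Complex.I • Complex.ofRealCLM ∘L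
        ((k.1 : ℝ) • ContinuousLinearMap.fst ℝ ℝ ℝ + (k.2 : ℝ) • ContinuousLinearMap.snd ℝ ℝ ℝ))
      x := by
  have hdot : HasFDerivAt (dotZ k)
      ((k.1 : ℝ) • ContinuousLinearMap.fst ℝ ℝ ℝ + (k.2 : ℝ) • ContinuousLinearMap.snd ℝ ℝ ℝ) x :=
    (hasFDerivAt_fst.const_mul (k.1 : ℝ)).add (hasFDerivAt_snd.const_mul (k.2 : ℝ))
  exact ((Complex.ofRealCLM.hasFDerivAt.comp x hdot).const_mul Complex.I).cexp

lemma dirD_trigPoly (v : ℝ × ℝ) (S : Finset Z2) (a : Z2 → ℂ) :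
    dirD v (trigPoly S a) = trigPoly S (fun k => Complex.I * (dotZ k v : ℂ) * a k) := by
  funext x
  have hderiv : HasFDerivAt (trigPoly S a) _ x :=
    HasFDerivAt.fun_sum fun k _ => (hasFDerivAt_fourierMode k x).const_mul (a k)
  rw [dirD, hderiv.fderiv]
  simp only [sum_apply, smul_apply, ContinuousLinearMap.comp_apply, add_apply,
    ContinuousLinearMap.coe_fst', ContinuousLinearMap.coe_snd', Complex.ofRealCLM_apply,
    smul_eq_mul, trigPoly]
  refine Finset.sum_congr rfl fun k _ => ?_
  rw [dotZ]
  ring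

end TrigonometricPolynomials

section FourierCoefficients

lemma neg_pi_le_pi : -π ≤ π := by linarith [Real.pi_pos]

lemma integrableOn_mul_exp_dotZ (k : Z2) {f : ℝ × ℝ → ℂ} (hf : Continuous f) :
    IntegrableOn (fun x => f x * Complex.exp (-Complex.I * (dotZ k x : ℝ))) Q2 := by
  refine ContinuousOn.integrableOn_compact isCompact_Icc (Continuous.continuousOn ?_)
  unfold dotZ
  fun_prop

lemma fCoeff_sub {f g : ℝ × ℝ → ℂ} (hf : Continuous f) (hg : Continuous g) (k : Z2) :
    fCoeff (fun x => f x - g x) k = fCoeff f k - fCoeff g k := by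
  simp only [fCoeff, sub_mul]
  rw [← mul_sub,
    ← integral_sub (integrableOn_mul_exp_dotZ k hf) (integrableOn_mul_exp_dotZ k hg)]

lemma fCoeff_eq_intervalIntegral {f : ℝ × ℝ → ℂ} (hf : Continuous f) (k : Z2) :
    fCoeff f k = (1 / (2 * π) ^ 2 : ℂ) *
      ∫ x in -π..π, (∫ y in -π..π, f (x, y) * Complex.exp (-Complex.I * ((k.2 * y : ℝ) : ℂ))) *
        Complex.exp (-Complex.I * ((k.1 * x : ℝ) : ℂ)) := by
  have hint := integrableOn_mul_exp_dotZ k hf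
  rw [Q2, ← Set.Icc_prod_Icc, Measure.volume_eq_prod] at hint
  rw [fCoeff, Q2, ← Set.Icc_prod_Icc, Measure.volume_eq_prod, setIntegral_prod _ hint,
    intervalIntegral.integral_of_le neg_pi_le_pi, ← integral_Icc_eq_integral_Ioc]
  congr 2 with x
  rw [intervalIntegral.integral_of_le neg_pi_le_pi, ← integral_Icc_eq_integral_Ioc,
    ← integral_mul_const]
  congr 1 with y
  rw [mul_assoc, ← Complex.exp_add, dotZ]
  push_cast
  ring_nf

lemma integral_exp_int_mul (n : ℤ) :
    ∫ x in -π..π, Complex.exp (Complex.I * ((n * x : ℝ) : ℂ)) =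
      if n = 0 then (2 * π : ℂ) else 0 := by
  split_ifs with hn
  · simp only [hn, Int.cast_zero, zero_mul, Complex.ofReal_zero, mul_zero, Complex.exp_zero,
      intervalIntegral.integral_const, sub_neg_eq_add, Complex.real_smul, mul_one]
    push_cast
    ring
  · have hIn : Complex.I * (n : ℂ) ≠ 0 := mul_ne_zero Complex.I_ne_zero (by exact_mod_cast hn)
    have hperiod : Complex.exp (Complex.I * n * (π : ℝ)) =
        Complex.exp (Complex.I * n * ((-π : ℝ) : ℂ)) := by
      rw [Complex.exp_eq_exp_iff_exists_int]
      exact ⟨n, by push_cast; ring⟩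
    simp only [Complex.ofReal_mul, Complex.ofReal_intCast, ← mul_assoc]
    rw [integral_exp_mul_complex hIn, hperiod, sub_self, zero_div]

lemma fCoeff_fourierMode (k j : Z2) : fCoeff (fourierMode k) j = if k = j then 1 else 0 := by
  have hfactor : ∀ x y : ℝ, fourierMode k (x, y) * Complex.exp (-Complex.I * ((j.2 * y : ℝ) : ℂ)) =
      Complex.exp (Complex.I * ((k.1 * x : ℝ) : ℂ)) *
        Complex.exp (Complex.I * (((k.2 - j.2 : ℤ) * y : ℝ) : ℂ)) := fun x y => by
    rw [fourierMode, dotZ, ← Complex.exp_add, ← Complex.exp_add]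
    push_cast
    ring_nf
  have hmode : ∀ x : ℝ, Complex.exp (Complex.I * ((k.1 * x : ℝ) : ℂ)) *
      Complex.exp (-Complex.I * ((j.1 * x : ℝ) : ℂ)) =
        Complex.exp (Complex.I * (((k.1 - j.1 : ℤ) * x : ℝ) : ℂ)) := fun x => by
    rw [← Complex.exp_add]
    push_cast
    ring_nf
  have hpi : (π : ℂ) ≠ 0 := by exact_mod_cast Real.pi_ne_zero
  rw [fCoeff_eq_intervalIntegral (continuous_fourierMode k)]
  simp only [hfactor, intervalIntegral.integral_const_mul, mul_right_comm _ _ (Complex.exp _),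
    hmode, intervalIntegral.integral_mul_const, integral_exp_int_mul, sub_eq_zero]
  by_cases h₁ : k.1 = j.1 <;> by_cases h₂ : k.2 = j.2 <;> simp [h₁, h₂, Prod.ext_iff]
  field_simp

lemma fCoeff_trigPoly (S : Finset Z2) (a : Z2 → ℂ) (k : Z2) :
    fCoeff (trigPoly S a) k = if k ∈ S then a k else 0 := by
  have hlinear : fCoeff (trigPoly S a) k = ∑ j ∈ S, a j * fCoeff (fourierMode j) k := by
    simp only [fCoeff, trigPoly, Finset.sum_mul, mul_assoc (a _)]
    rw [integral_finsetSum _ fun j _ =>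
      (integrableOn_mul_exp_dotZ k (continuous_fourierMode j)).const_mul _, Finset.mul_sum]
    simp only [integral_const_mul, mul_left_comm]
  simp [hlinear, fCoeff_fourierMode]

lemma Tmult_trigPoly (S : Finset Z2) (a m : Z2 → ℂ) :
    Tmult m (trigPoly S a) = trigPoly S (fun k => m k * a k) := by
  funext x
  rw [Tmult, tsum_eq_sum (s := S) fun k hk => by rw [fCoeff_trigPoly, if_neg hk]; simp]
  exact Finset.sum_congr rfl fun k hk => by rw [fCoeff_trigPoly, if_pos hk, fourierMode]

lemma eq_zero_of_integral_mul_exp_eq_zero {f : ℝ → ℂ} (hf : Continuous f)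
    (hper : Function.Periodic f (2 * π))
    (h : ∀ n : ℤ, ∫ x in -π..π, f x * Complex.exp (-Complex.I * ((n * x : ℝ) : ℂ)) = 0) (x : ℝ) :
    f x = 0 := by
  have : Fact (0 < 2 * π) := ⟨by positivity⟩
  let F : C(AddCircle (2 * π), ℂ) := ⟨hper.lift, continuous_coinduced_dom.mpr hf⟩
  have hF : ∀ y : ℝ, F (y : AddCircle (2 * π)) = f y := fun _ => rfl
  have hcoeff : ∀ n, fourierCoeff F n = 0 := by
    intro n
    have hpi : (π : ℂ) ≠ 0 := by exact_mod_cast Real.pi_ne_zero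
    have hintegrand : ∀ y : ℝ, fourier (-n) (y : AddCircle (2 * π)) • F (y : AddCircle (2 * π)) =
        f y * Complex.exp (-Complex.I * ((n * y : ℝ) : ℂ)) := fun y => by
      rw [hF, fourier_coe_apply, smul_eq_mul, mul_comm]
      congr 2
      push_cast
      field_simp
    rw [fourierCoeff_eq_intervalIntegral _ n (-π), show -π + 2 * π = π by ring]
    simp only [hintegrand, h n, smul_zero]
  have hsum := has_pointwise_sum_fourier_series_of_summable (f := F)
    (by rw [show fourierCoeff F = 0 from funext hcoeff]; exact summable_zero) x
  simp only [hcoeff, zero_smul, hF] at hsum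
  exact hsum.unique hasSum_zero

lemma eq_zero_of_fCoeff_eq_zero {f : ℝ × ℝ → ℂ} (hf : Continuous f) (hper : Periodic2 f)
    (h : ∀ k, fCoeff f k = 0) (x : ℝ × ℝ) : f x = 0 := by
  have hslice : ∀ (n : ℤ) (s : ℝ),
      ∫ y in -π..π, f (s, y) * Complex.exp (-Complex.I * ((n * y : ℝ) : ℂ)) = 0 := by
    intro n
    refine eq_zero_of_integral_mul_exp_eq_zero ?_ ?_ fun m => ?_
    · apply intervalIntegral.continuous_parametric_intervalIntegral_of_continuous'
      unfold Function.uncurry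
      fun_prop
    · intro s
      simp only [(hper (s, _)).1]
    · have hmn := h (m, n)
      rw [fCoeff_eq_intervalIntegral hf] at hmn
      exact (mul_eq_zero.mp hmn).resolve_left (by simp [Real.pi_ne_zero])
  exact eq_zero_of_integral_mul_exp_eq_zero (f := fun y => f (x.1, y)) (by fun_prop)
    (fun y => (hper (x.1, y)).2) (fun n => hslice n x.1) x.2

lemma eq_trigPoly_of_fCoeff_eq_zero {f : ℝ × ℝ → ℂ} (hf : Continuous f) (hper : Periodic2 f)
    {S : Finset Z2} (h : ∀ k ∉ S, fCoeff f k = 0) : f = trigPoly S (fCoeff f) := by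
  funext x
  have hpoly := continuous_trigPoly S (fCoeff f)
  refine sub_eq_zero.mp (eq_zero_of_fCoeff_eq_zero (hf.sub hpoly) (fun y => ?_) (fun k => ?_) x)
  · have hper' := periodic2_trigPoly S (fCoeff f) y
    simp only [Pi.sub_apply, (hper y).1, (hper y).2, hper'.1, hper'.2, and_self]
  · rw [show f - trigPoly S (fCoeff f) = fun x => f x - trigPoly S (fCoeff f) x from rfl,
      fCoeff_sub hf hpoly, fCoeff_trigPoly]
    split_ifs with hk
    · exact sub_self _
    · rw [h k hk, sub_zero]

end FourierCoefficients

section MultiplierBounds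

variable {S : Finset Z2} {m n : Z2 → ℂ} {c d : ℝ} {k : Z2}

lemma trigPoly_add (S : Finset Z2) (a b : Z2 → ℂ) (x : ℝ × ℝ) :
    trigPoly S (fun k => a k + b k) x = trigPoly S a x + trigPoly S b x := by
  simp only [trigPoly, add_mul, Finset.sum_add_distrib]

lemma trigPoly_const_mul (S : Finset Z2) (z : ℂ) (a : Z2 → ℂ) (x : ℝ × ℝ) :
    trigPoly S (fun k => z * a k) x = z * trigPoly S a x := by
  simp only [trigPoly, Finset.mul_sum, mul_assoc]

lemma trigPoly_congr {a b : Z2 → ℂ} (h : ∀ k ∈ S, a k = b k) : trigPoly S a = trigPoly S b :=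
  funext fun _ => Finset.sum_congr rfl fun k hk => by rw [h k hk]

/-- The multiplier `m` has norm at most `c` on trigonometric polynomials with spectrum in `S`, in
the sup norm. Stating this for every upper bound `M` of the polynomial, instead of for its supremum,
lets bounds be composed without first checking that the suprema are finite. -/
def MultiplierBound (S : Finset Z2) (m : Z2 → ℂ) (c : ℝ) : Prop :=
  ∀ (a : Z2 → ℂ) (M : ℝ), (∀ x, ‖trigPoly S a x‖ ≤ M) →
    ∀ x, ‖trigPoly S (fun k => m k * a k) x‖ ≤ c * M

namespace MultiplierBound

lemma nonneg (h : MultiplierBound S m c) : 0 ≤ c := by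
  have hone := h 0 1 (fun x => by simp [trigPoly]) 0
  exact (norm_nonneg _).trans (hone.trans_eq (mul_one c))

lemma congr (h : MultiplierBound S m c) (hmn : ∀ k ∈ S, n k = m k) : MultiplierBound S n c := by
  intro a M hM
  rw [trigPoly_congr (b := fun k => m k * a k) fun k hk => by rw [hmn k hk]]
  exact h a M hM

lemma mono (h : MultiplierBound S m c) (hcd : c ≤ d) : MultiplierBound S m d := fun a M hM x =>
  (h a M hM x).trans (mul_le_mul_of_nonneg_right hcd ((norm_nonneg _).trans (hM x)))

lemma const (S : Finset Z2) (z : ℂ) : MultiplierBound S (fun _ => z) ‖z‖ := by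
  intro a M hM x
  rw [trigPoly_const_mul, norm_mul]
  exact mul_le_mul_of_nonneg_left (hM x) (norm_nonneg z)

lemma add (hm : MultiplierBound S m c) (hn : MultiplierBound S n d) :
    MultiplierBound S (fun k => m k + n k) (c + d) := by
  intro a M hM x
  simp only [add_mul, trigPoly_add]
  exact norm_add_le_of_le (hm a M hM x) (hn a M hM x)

lemma mul (hm : MultiplierBound S m c) (hn : MultiplierBound S n d) :
    MultiplierBound S (fun k => m k * n k) (c * d) := by
  intro a M hM x
  simp only [mul_assoc]
  exact hm _ _ (hn a M hM) x

lemma const_mul (z : ℂ) (h : MultiplierBound S m c) :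
    MultiplierBound S (fun k => z * m k) (‖z‖ * c) :=
  (const S z).mul h

lemma pow (h : MultiplierBound S m c) (j : ℕ) : MultiplierBound S (fun k => m k ^ j) (c ^ j) := by
  induction j with
  | zero => simpa only [pow_zero, norm_one] using const S 1
  | succ j ih => simpa only [pow_succ] using ih.mul h

lemma sum {ι : Type*} {m : ι → Z2 → ℂ} {c : ι → ℝ} (h : ∀ i, MultiplierBound S (m i) (c i))
    (s : Finset ι) : MultiplierBound S (fun k => ∑ i ∈ s, m i k) (∑ i ∈ s, c i) := by
  classical
  induction s using Finset.induction_on with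
  | empty => simpa only [Finset.sum_empty, norm_zero] using const S 0
  | insert i s hi ih => simpa only [Finset.sum_insert hi] using (h i).add ih

lemma norm_le (h : MultiplierBound S m c) (hk : k ∈ S) : ‖m k‖ ≤ c := by
  have hsingle : ∀ (z : Z2 → ℂ) x, trigPoly S (fun j => z j * (Pi.single k 1 : Z2 → ℂ) j) x =
      z k * fourierMode k x := fun z x => by
    simp [trigPoly, Pi.single_apply, hk]
  have hmode := h (Pi.single k 1) 1 (fun x => by
    simpa only [Pi.one_apply, one_mul, norm_fourierMode] using (congrArg norm (hsingle 1 x)).le) 0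
  simpa only [hsingle, norm_mul, norm_fourierMode, mul_one] using hmode

lemma of_tendsto {ι : Type*} {l : Filter ι} [l.NeBot] {u : ι → Z2 → ℂ} {c : ι → ℝ} {C : ℝ}
    (h : ∀ i, MultiplierBound S (u i) (c i)) (hu : ∀ k ∈ S, Tendsto (u · k) l (𝓝 (m k)))
    (hc : Tendsto c l (𝓝 C)) : MultiplierBound S m C := by
  intro a M hM x
  refine le_of_tendsto_of_tendsto' (Tendsto.norm ?_) (hc.mul_const M) fun i => h i a M hM x
  exact tendsto_finsetSum S fun k hk => ((hu k hk).mul_const _).mul_const _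

lemma hasSum {ι : Type*} {u : ι → Z2 → ℂ} {c : ι → ℝ} {C : ℝ}
    (h : ∀ i, MultiplierBound S (u i) (c i)) (hu : ∀ k ∈ S, HasSum (u · k) (m k))
    (hc : HasSum c C) : MultiplierBound S m C :=
  of_tendsto (sum h) hu hc

lemma integral {α : Type*} [MeasurableSpace α] {ρ : Measure α} {u : α → Z2 → ℂ} {c : α → ℝ}
    (h : ∀ᵐ t ∂ρ, MultiplierBound S (u t) (c t)) (hu : ∀ k ∈ S, Integrable (u · k) ρ)
    (hc : Integrable c ρ) : MultiplierBound S (fun k => ∫ t, u t k ∂ρ) (∫ t, c t ∂ρ) := by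
  intro a M hM x
  have hfubini : trigPoly S (fun k => (∫ t, u t k ∂ρ) * a k) x =
      ∫ t, trigPoly S (fun k => u t k * a k) x ∂ρ := by
    simp only [trigPoly]
    rw [integral_finsetSum S fun k hk => ((hu k hk).mul_const _).mul_const _]
    simp only [integral_mul_const]
  rw [hfubini, ← integral_mul_const]
  exact norm_integral_le_of_norm_le (hc.mul_const M) (h.mono fun t ht => ht a M hM x)

lemma inv_const_add {t : ℂ} (h : MultiplierBound S m c) (hct : c < ‖t‖) :
    MultiplierBound S (fun k => (t + m k)⁻¹) (‖t‖ - c)⁻¹ := by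
  have ht : 0 < ‖t‖ := h.nonneg.trans_lt hct
  have ht0 : t ≠ 0 := norm_pos_iff.mp ht
  have hratio : ‖-t⁻¹‖ * c < 1 := by
    rwa [norm_neg, norm_inv, inv_mul_lt_one₀ ht]
  have hgeom := (hasSum_geometric_of_lt_one (mul_nonneg (norm_nonneg _) h.nonneg) hratio).mul_left
    ‖t⁻¹‖
  refine (hasSum (fun j => ((h.const_mul (-t⁻¹)).pow j).const_mul t⁻¹) (fun k hk => ?_)
    hgeom).mono ?_
  · have hk : ‖-t⁻¹ * m k‖ < 1 := ((h.const_mul (-t⁻¹)).norm_le hk).trans_lt hratio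
    have hlimit : (t + m k)⁻¹ = t⁻¹ * (1 - -t⁻¹ * m k)⁻¹ := by
      rw [← mul_inv, neg_mul, sub_neg_eq_add, mul_add, mul_one, mul_inv_cancel_left₀ ht0]
    rw [hlimit]
    exact (hasSum_geometric_of_norm_lt_one hk).mul_left t⁻¹
  · rw [norm_neg, norm_inv, ← mul_inv, mul_sub, mul_one, mul_inv_cancel_left₀ ht.ne']

lemma translation (S : Finset Z2) (v : ℝ × ℝ) : MultiplierBound S (fourierMode · v) 1 := by
  intro a M hM x
  have htranslate : trigPoly S (fun k => fourierMode k v * a k) x = trigPoly S a (x + v) :=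
    Finset.sum_congr rfl fun k _ => by rw [fourierMode_add]; ring
  rw [htranslate, one_mul]
  exact hM (x + v)

lemma cos_dotZ_add (S : Finset Z2) (v : ℝ × ℝ) (φ : ℝ) :
    MultiplierBound S (fun k => (Real.cos (dotZ k v + φ) : ℂ)) 1 := by
  have hexp : ∀ s : ℝ, ‖Complex.exp (Complex.I * s) / 2‖ = 1 / 2 := fun s => by
    rw [norm_div, mul_comm, Complex.norm_exp_ofReal_mul_I, Complex.norm_ofNat]
  have hshift := ((translation S v).const_mul (Complex.exp (Complex.I * φ) / 2)).add
    ((translation S (-v)).const_mul (Complex.exp (Complex.I * (-φ : ℝ)) / 2))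
  rw [hexp, hexp] at hshift
  refine (hshift.congr fun k _ => ?_).mono (by norm_num)
  rw [Complex.ofReal_cos, Complex.cos, fourierMode, fourierMode, dotZ_neg_right,
    div_mul_eq_mul_div, div_mul_eq_mul_div, ← Complex.exp_add, ← Complex.exp_add, ← add_div]
  push_cast
  ring_nf

lemma norm_le_supNorm (h : MultiplierBound S m c) (a : Z2 → ℂ) (x : ℝ × ℝ) :
    ‖trigPoly S (fun k => m k * a k) x‖ ≤ c * supNorm (trigPoly S a) :=
  h a _ (norm_trigPoly_le_supNorm S a) x

lemma supNorm_le (h : MultiplierBound S m c) (a : Z2 → ℂ) :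
    supNorm (trigPoly S fun k => m k * a k) ≤ c * supNorm (trigPoly S a) :=
  ciSup_le (h.norm_le_supNorm a)

end MultiplierBound

end MultiplierBounds

section BernsteinInequality

lemma hasSum_odd_of_hasSum_even {f : ℕ → ℝ} {A B : ℝ} (h : HasSum f A)
    (heven : HasSum (fun n => f (2 * n)) B) : HasSum (fun n => f (2 * n + 1)) (A - B) := by
  have hodd : Summable (fun n => f (2 * n + 1)) :=
    h.summable.comp_injective fun a b hab => by simpa using hab
  rw [← (heven.even_add_odd hodd.hasSum).unique h, add_sub_cancel_left]
  exact hodd.hasSum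

lemma hasSum_cos_nat_mul_div_sq {θ : ℝ} (h₀ : 0 ≤ θ) (h₁ : θ ≤ 2 * π) :
    HasSum (fun n : ℕ => Real.cos (n * θ) / (n : ℝ) ^ 2)
      (θ ^ 2 / 4 - π * θ / 2 + π ^ 2 / 6) := by
  have hx : θ / (2 * π) ∈ Set.Icc (0 : ℝ) 1 :=
    ⟨div_nonneg h₀ Real.two_pi_pos.le, div_le_one_of_le₀ h₁ Real.two_pi_pos.le⟩
  convert hasSum_one_div_nat_pow_mul_cos one_ne_zero hx using 1
  · funext n
    rw [show 2 * π * n * (θ / (2 * π)) = n * θ by field_simp, mul_one, one_div_mul_eq_div]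
  · have hbernoulli := bernoulliFun_two (θ / (2 * π))
    rw [bernoulliFun] at hbernoulli
    rw [mul_one, hbernoulli, Nat.factorial_two]
    push_cast
    field_simp
    ring

lemma hasSum_cos_odd_mul_div_sq {θ : ℝ} (h₀ : 0 ≤ θ) (h₁ : θ ≤ π) :
    HasSum (fun n : ℕ => Real.cos ((2 * n + 1) * θ) / (2 * (n : ℝ) + 1) ^ 2)
      (π ^ 2 / 8 - π * θ / 4) := by
  have hall := hasSum_cos_nat_mul_div_sq h₀ (by linarith [Real.pi_pos])
  have hterm : ∀ n : ℕ, Real.cos ((2 * n : ℕ) * θ) / ((2 * n : ℕ) : ℝ) ^ 2 =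
      Real.cos (n * (2 * θ)) / (n : ℝ) ^ 2 / 4 := fun n => by
    push_cast
    ring_nf
  have heven : HasSum (fun n : ℕ => Real.cos ((2 * n : ℕ) * θ) / ((2 * n : ℕ) : ℝ) ^ 2)
      (((2 * θ) ^ 2 / 4 - π * (2 * θ) / 2 + π ^ 2 / 6) / 4) := by
    simpa only [hterm] using
      (hasSum_cos_nat_mul_div_sq (θ := 2 * θ) (by linarith) (by linarith)).div_const 4
  have hvalue : θ ^ 2 / 4 - π * θ / 2 + π ^ 2 / 6 -
      ((2 * θ) ^ 2 / 4 - π * (2 * θ) / 2 + π ^ 2 / 6) / 4 = π ^ 2 / 8 - π * θ / 4 := by ring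
  simpa only [hvalue, Nat.cast_add, Nat.cast_mul, Nat.cast_ofNat, Nat.cast_one] using
    hasSum_odd_of_hasSum_even hall heven

lemma hasSum_triangleWave {M x : ℝ} (hM : 0 < M) (hx : |x| ≤ M) :
    HasSum (fun n : ℕ => 8 * M / π ^ 2 *
      (Real.cos ((2 * n + 1) * (π / 2 - π * x / (2 * M))) / (2 * (n : ℝ) + 1) ^ 2)) x := by
  have hpi := Real.pi_pos
  obtain ⟨hx₀, hx₁⟩ := abs_le.mp hx
  have hθ : π / 2 - π * x / (2 * M) = π * (M - x) / (2 * M) := by field_simp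
  have h₀ : 0 ≤ π / 2 - π * x / (2 * M) := by
    rw [hθ]
    exact div_nonneg (mul_nonneg hpi.le (by linarith)) (by linarith)
  have h₁ : π / 2 - π * x / (2 * M) ≤ π := by
    rw [hθ, div_le_iff₀ (by linarith)]
    nlinarith
  have hvalue : 8 * M / π ^ 2 * (π ^ 2 / 8 - π * (π / 2 - π * x / (2 * M)) / 4) = x := by
    field_simp
    ring
  exact (congrArg (HasSum _) hvalue).mp ((hasSum_cos_odd_mul_div_sq h₀ h₁).mul_left _)

-- Bernstein's inequality: on `[-M, M]` the triangle wave, a series of cosines with positive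
-- coefficients times phases, agrees with the identity, and its coefficients add up to `M`.
lemma MultiplierBound.bernstein {S : Finset Z2} {M : ℝ} {v : ℝ × ℝ} (hM : 0 < M)
    (hS : ∀ k ∈ S, |dotZ k v| ≤ M) : MultiplierBound S (fun k => (dotZ k v : ℂ)) M := by
  have hcoeff : HasSum (fun n : ℕ => 8 * M / π ^ 2 * (1 / (2 * (n : ℝ) + 1) ^ 2)) M := by
    convert hasSum_triangleWave hM (abs_of_pos hM).le using 4 with n
    rw [show π / 2 - π * M / (2 * M) = 0 by field_simp; ring, mul_zero, Real.cos_zero]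
  refine hasSum (u := fun (n : ℕ) k => ((8 * M / π ^ 2 * (Real.cos ((2 * n + 1) *
      (π / 2 - π * dotZ k v / (2 * M))) / (2 * (n : ℝ) + 1) ^ 2) : ℝ) : ℂ))
    (fun n => ?_) (fun k hk => Complex.hasSum_ofReal.mpr (hasSum_triangleWave hM (hS k hk))) hcoeff
  have hcos := (cos_dotZ_add S (-((2 * n + 1) * π / (2 * M)) • v) ((2 * n + 1) * π / 2)).const_mul
    ((8 * M / π ^ 2 * (1 / (2 * (n : ℝ) + 1) ^ 2) : ℝ) : ℂ)
  rw [Complex.norm_of_nonneg (by positivity), mul_one] at hcos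
  refine hcos.congr fun k _ => ?_
  have hangle : (2 * n + 1) * (π / 2 - π * dotZ k v / (2 * M)) =
      -((2 * n + 1) * π / (2 * M)) * dotZ k v + (2 * n + 1) * π / 2 := by ring
  rw [dotZ_smul, hangle, ← Complex.ofReal_mul]
  congr 1
  ring

end BernsteinInequality

section SquareRoots

/-- The number `1 / (√(A² + b²) + A)`, which measures the deviation of `√(A² + b²)` from `A`. -/
def invSqrtAdd (A b : ℝ) : ℝ := (√(A ^ 2 + b ^ 2) + A)⁻¹

/-- The convergents of the continued fraction `1 / (2A + b² / (2A + b² / ⋯))` of `invSqrtAdd A b`,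
which express it through arithmetic operations that multiplier bounds can follow. -/
def invSqrtAddConvergent (A b : ℝ) : ℕ → ℝ
  | 0 => 0
  | n + 1 => (2 * A + b ^ 2 * invSqrtAddConvergent A b n)⁻¹

variable {A a b : ℝ}

lemma sqrt_sq_add_sq_add_pos (hA : 0 < A) (b : ℝ) : 0 < √(A ^ 2 + b ^ 2) + A :=
  add_pos_of_nonneg_of_pos (Real.sqrt_nonneg _) hA

lemma invSqrtAdd_nonneg (hA : 0 < A) (b : ℝ) : 0 ≤ invSqrtAdd A b :=
  inv_nonneg.mpr (sqrt_sq_add_sq_add_pos hA b).le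

lemma sqrt_sq_add_sq_eq (hA : 0 < A) (b : ℝ) :
    √(A ^ 2 + b ^ 2) = A + b ^ 2 * invSqrtAdd A b := by
  have hne := (sqrt_sq_add_sq_add_pos hA b).ne'
  have hsq := Real.sq_sqrt (by positivity : 0 ≤ A ^ 2 + b ^ 2)
  rw [invSqrtAdd]
  field_simp
  linear_combination hsq

lemma invSqrtAdd_eq_inv (hA : 0 < A) (b : ℝ) :
    invSqrtAdd A b = (2 * A + b ^ 2 * invSqrtAdd A b)⁻¹ := by
  nth_rewrite 1 [invSqrtAdd]
  rw [sqrt_sq_add_sq_eq hA b]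
  ring_nf

lemma invSqrtAddConvergent_nonneg (hA : 0 < A) (b : ℝ) (n : ℕ) :
    0 ≤ invSqrtAddConvergent A b n := by
  induction n with
  | zero => exact le_rfl
  | succ n ih => exact inv_nonneg.mpr (by positivity)

lemma abs_inv_two_mul_add_sub_le {x y : ℝ} (hA : 0 < A) (hb : |b| ≤ A) (hx : 0 ≤ x) (hy : 0 ≤ y) :
    |(2 * A + b ^ 2 * x)⁻¹ - (2 * A + b ^ 2 * y)⁻¹| ≤ 1 / 4 * |x - y| := by
  have hx' : 2 * A ≤ 2 * A + b ^ 2 * x := le_add_of_nonneg_right (by positivity)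
  have hy' : 2 * A ≤ 2 * A + b ^ 2 * y := le_add_of_nonneg_right (by positivity)
  have hxpos : 0 < 2 * A + b ^ 2 * x := by linarith
  have hypos : 0 < 2 * A + b ^ 2 * y := by linarith
  have hbA : b ^ 2 ≤ A ^ 2 := sq_le_sq' (abs_le.mp hb).1 (abs_le.mp hb).2
  rw [inv_sub_inv hxpos.ne' hypos.ne', abs_div, abs_of_pos (mul_pos hxpos hypos),
    div_le_iff₀ (mul_pos hxpos hypos)]
  calc |2 * A + b ^ 2 * y - (2 * A + b ^ 2 * x)| = b ^ 2 * |x - y| := by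
        rw [add_sub_add_left_eq_sub, ← mul_sub, abs_mul, abs_sq, abs_sub_comm]
    _ ≤ A ^ 2 * |x - y| := by gcongr
    _ = 1 / 4 * |x - y| * (2 * A * (2 * A)) := by ring
    _ ≤ 1 / 4 * |x - y| * ((2 * A + b ^ 2 * x) * (2 * A + b ^ 2 * y)) := by gcongr

lemma tendsto_invSqrtAddConvergent (hA : 0 < A) (hb : |b| ≤ A) :
    Tendsto (invSqrtAddConvergent A b) atTop (𝓝 (invSqrtAdd A b)) := by
  have herror : ∀ n, |invSqrtAddConvergent A b n - invSqrtAdd A b| ≤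
      (1 / 4) ^ n * |invSqrtAdd A b| := by
    intro n
    induction n with
    | zero => simp [invSqrtAddConvergent]
    | succ n ih =>
      calc |invSqrtAddConvergent A b (n + 1) - invSqrtAdd A b|
          = |(2 * A + b ^ 2 * invSqrtAddConvergent A b n)⁻¹ -
              (2 * A + b ^ 2 * invSqrtAdd A b)⁻¹| := by
            rw [← invSqrtAdd_eq_inv hA b, invSqrtAddConvergent]
        _ ≤ 1 / 4 * |invSqrtAddConvergent A b n - invSqrtAdd A b| :=
            abs_inv_two_mul_add_sub_le hA hb (invSqrtAddConvergent_nonneg hA b n)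
              (invSqrtAdd_nonneg hA b)
        _ ≤ (1 / 4) ^ (n + 1) * |invSqrtAdd A b| := by rw [pow_succ', mul_assoc]; gcongr
  refine tendsto_iff_norm_sub_tendsto_zero.mpr (squeeze_zero (fun _ => norm_nonneg _) herror ?_)
  simpa only [zero_mul] using
    (tendsto_pow_atTop_nhds_zero_of_lt_one (by norm_num) (by norm_num)).mul_const |invSqrtAdd A b|

/-- Twice the quotient by `b²` of the even part in `a` of `√((1 + a)² + b²) - 1`. -/
def sqrtEvenPart (a b : ℝ) : ℝ := invSqrtAdd (1 + a) b + invSqrtAdd (1 + -a) b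

/-- The quotient by `a * b²` of the odd part in `a` of `√((1 + a)² + b²) - (1 + a)`. -/
def sqrtOddPart (a b : ℝ) : ℝ :=
  -((2 + b ^ 2 * sqrtEvenPart a b)⁻¹ * sqrtEvenPart a b)

lemma sqrt_add_sqrt_half_sub_one (ha : |a| < 1) (b : ℝ) :
    (√((1 + a) ^ 2 + b ^ 2) + √((1 + -a) ^ 2 + b ^ 2)) / 2 - 1 =
      1 / 2 * b ^ 2 * sqrtEvenPart a b := by
  obtain ⟨ha₀, ha₁⟩ := abs_lt.mp ha
  rw [sqrt_sq_add_sq_eq (by linarith), sqrt_sq_add_sq_eq (by linarith), sqrtEvenPart]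
  ring

-- The difference of the squares of the two roots is `4a`, so dividing by their sum gives their
-- difference.
lemma sqrt_sub_sqrt_half_sub (ha : |a| < 1) (b : ℝ) :
    (√((1 + a) ^ 2 + b ^ 2) - √((1 + -a) ^ 2 + b ^ 2)) / 2 - a = a * b ^ 2 * sqrtOddPart a b := by
  obtain ⟨ha₀, ha₁⟩ := abs_lt.mp ha
  have hsum : √((1 + a) ^ 2 + b ^ 2) + √((1 + -a) ^ 2 + b ^ 2) = 2 + b ^ 2 * sqrtEvenPart a b := by
    linear_combination 2 * sqrt_add_sqrt_half_sub_one ha b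
  have hpos : 0 < 2 + b ^ 2 * sqrtEvenPart a b :=
    hsum ▸ add_pos (Real.sqrt_pos.mpr (by nlinarith [sq_nonneg b]))
      (Real.sqrt_pos.mpr (by nlinarith [sq_nonneg b]))
  have hdiff : (√((1 + a) ^ 2 + b ^ 2) - √((1 + -a) ^ 2 + b ^ 2)) *
      (2 + b ^ 2 * sqrtEvenPart a b) = 4 * a := by
    rw [← hsum]
    linear_combination Real.sq_sqrt (by positivity : 0 ≤ (1 + a) ^ 2 + b ^ 2) -
      Real.sq_sqrt (by positivity : 0 ≤ (1 + -a) ^ 2 + b ^ 2)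
  rw [eq_div_of_mul_eq hpos.ne' hdiff, sqrtOddPart]
  field_simp
  ring

end SquareRoots

namespace MultiplierBound

variable {S : Finset Z2} {a b : Z2 → ℝ} {ε : ℝ}

lemma neg_ofReal {c : ℝ} (ha : MultiplierBound S (fun k => (a k : ℂ)) c) :
    MultiplierBound S (fun k => ((-a k : ℝ) : ℂ)) c := by
  simpa only [norm_neg, norm_one, one_mul, neg_mul, Complex.ofReal_neg] using ha.const_mul (-1)

lemma invSqrtAddConvergent (ha : MultiplierBound S (fun k => (a k : ℂ)) (1 / 2))
    (hb : MultiplierBound S (fun k => (b k : ℂ)) (1 / 2)) (n : ℕ) :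
    MultiplierBound S (fun k => (invSqrtAddConvergent (1 + a k) (b k) n : ℂ)) 2 := by
  induction n with
  | zero => simpa only [_root_.invSqrtAddConvergent, Complex.ofReal_zero, norm_zero] using
      (const S 0).mono (by norm_num : ‖(0 : ℂ)‖ ≤ 2)
  | succ n ih =>
    have hperturbation := ((ha.const_mul 2).add ((hb.pow 2).mul ih)).inv_const_add (t := 2)
      (by norm_num)
    refine (hperturbation.congr fun k _ => ?_).mono (by norm_num)
    rw [_root_.invSqrtAddConvergent]
    push_cast
    ring_nf

lemma invSqrtAdd (ha : MultiplierBound S (fun k => (a k : ℂ)) (1 / 2))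
    (hb : MultiplierBound S (fun k => (b k : ℂ)) (1 / 2)) :
    MultiplierBound S (fun k => (invSqrtAdd (1 + a k) (b k) : ℂ)) 2 := by
  refine of_tendsto (l := atTop) (invSqrtAddConvergent ha hb) (fun k hk => ?_) tendsto_const_nhds
  have hak := ha.norm_le hk
  have hbk := hb.norm_le hk
  rw [Complex.norm_real, Real.norm_eq_abs] at hak hbk
  have hA : 1 / 2 ≤ 1 + a k := by linarith [neg_abs_le (a k)]
  exact (Complex.continuous_ofReal.tendsto _).comp
    (tendsto_invSqrtAddConvergent (by linarith) (hbk.trans hA))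

lemma sqrtEvenPart (ha : MultiplierBound S (fun k => (a k : ℂ)) (1 / 2))
    (hb : MultiplierBound S (fun k => (b k : ℂ)) (1 / 2)) :
    MultiplierBound S (fun k => (sqrtEvenPart (a k) (b k) : ℂ)) 4 := by
  refine (((invSqrtAdd ha hb).add (invSqrtAdd ha.neg_ofReal hb)).congr fun k _ => ?_).mono
    (by norm_num)
  rw [_root_.sqrtEvenPart, Complex.ofReal_add]

lemma sqrtOddPart (ha : MultiplierBound S (fun k => (a k : ℂ)) (1 / 2))
    (hb : MultiplierBound S (fun k => (b k : ℂ)) (1 / 2)) :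
    MultiplierBound S (fun k => (sqrtOddPart (a k) (b k) : ℂ)) 4 := by
  have hinv := ((hb.pow 2).mul (sqrtEvenPart ha hb)).inv_const_add (t := 2) (by norm_num)
  refine (((hinv.mul (sqrtEvenPart ha hb)).const_mul (-1)).congr fun k _ => ?_).mono (by norm_num)
  rw [_root_.sqrtOddPart]
  push_cast
  ring

end MultiplierBound

section OperatorSymbols

variable {S : Finset Z2} {l v : ℝ × ℝ} {lam μ : ℝ} {κ : Z2}

lemma knorm_sq (k : Z2) : knorm k ^ 2 = (k.1 : ℝ) ^ 2 + (k.2 : ℝ) ^ 2 :=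
  Real.sq_sqrt (by positivity)

lemma knorm_sq_pos {k : Z2} (hk : k ≠ 0) : 0 < knorm k ^ 2 := by
  have hcoord : (k.1 : ℝ) ≠ 0 ∨ (k.2 : ℝ) ≠ 0 := by
    simpa [Prod.ext_iff, or_iff_not_imp_left] using hk
  rw [knorm_sq]
  rcases hcoord with h | h <;> positivity

lemma perp_fst_sq_add_snd_sq (hv : v.1 ^ 2 + v.2 ^ 2 = 1) :
    (perp v).1 ^ 2 + (perp v).2 ^ 2 = 1 := by
  rw [perp]
  linear_combination hv

lemma dotZ_sq_add_dotZ_perp_sq (hv : v.1 ^ 2 + v.2 ^ 2 = 1) (k : Z2) :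
    dotZ k v ^ 2 + dotZ k (perp v) ^ 2 = knorm k ^ 2 := by
  rw [knorm_sq, dotZ, dotZ, perp]
  linear_combination ((k.1 : ℝ) ^ 2 + (k.2 : ℝ) ^ 2) * hv

lemma abs_dotZ_le_knorm (hv : v.1 ^ 2 + v.2 ^ 2 = 1) (k : Z2) : |dotZ k v| ≤ knorm k := by
  refine abs_le_of_sq_le_sq ?_ (Real.sqrt_nonneg _)
  rw [← dotZ_sq_add_dotZ_perp_sq hv]
  exact le_add_of_nonneg_right (sq_nonneg _)

lemma MultiplierBound.dotZ_of_knorm_le (hμ : 0 < μ) (hS : ∀ k ∈ S, knorm k ≤ μ)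
    (hv : v.1 ^ 2 + v.2 ^ 2 = 1) : MultiplierBound S (fun k => (dotZ k v : ℂ)) μ :=
  bernstein hμ fun k hk => (abs_dotZ_le_knorm hv k).trans (hS k hk)

lemma MultiplierBound.dotZ_div (hμ : 0 < μ) (hμlam : μ ≤ lam / 2) (hS : ∀ k ∈ S, knorm k ≤ μ)
    (hv : v.1 ^ 2 + v.2 ^ 2 = 1) :
    MultiplierBound S (fun k => ((dotZ k v / lam : ℝ) : ℂ)) (1 / 2) := by
  have hlam : 0 < lam := by linarith
  refine (((dotZ_of_knorm_le hμ hS hv).const_mul ((lam⁻¹ : ℝ) : ℂ)).congr fun k _ => ?_).mono ?_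
  · rw [div_eq_inv_mul, Complex.ofReal_mul]
  · rw [Complex.norm_of_nonneg (by positivity), inv_mul_le_iff₀ hlam]
    linarith

lemma knorm_add_eq (hl : l.1 ^ 2 + l.2 ^ 2 = 1) (hlam : 0 < lam) (hκ₁ : (κ.1 : ℝ) = lam * l.1)
    (hκ₂ : (κ.2 : ℝ) = lam * l.2) (k : Z2) :
    knorm (κ + k) = lam * √((1 + dotZ k l / lam) ^ 2 + (dotZ k (perp l) / lam) ^ 2) := by
  rw [knorm, Real.sqrt_eq_iff_mul_self_eq (by positivity) (by positivity), mul_mul_mul_comm,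
    Real.mul_self_sqrt (by positivity), dotZ, dotZ, perp, Prod.fst_add, Prod.snd_add]
  push_cast
  rw [hκ₁, hκ₂]
  field_simp
  linear_combination (lam ^ 2 - (k.1 : ℝ) ^ 2 - (k.2 : ℝ) ^ 2) * hl

lemma dotZ_neg_left (k : Z2) (x : ℝ × ℝ) : dotZ (-k) x = -dotZ k x := by
  simp only [dotZ, Prod.fst_neg, Prod.snd_neg, Int.cast_neg]
  ring

lemma knorm_sub_eq (hl : l.1 ^ 2 + l.2 ^ 2 = 1) (hlam : 0 < lam) (hκ₁ : (κ.1 : ℝ) = lam * l.1)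
    (hκ₂ : (κ.2 : ℝ) = lam * l.2) (k : Z2) :
    knorm (κ - k) = lam * √((1 + -(dotZ k l / lam)) ^ 2 + (dotZ k (perp l) / lam) ^ 2) := by
  rw [sub_eq_add_neg, knorm_add_eq hl hlam hκ₁ hκ₂, dotZ_neg_left, dotZ_neg_left, neg_div, neg_div,
    neg_sq (dotZ k (perp l) / lam)]

lemma abs_dotZ_div_lt_one {k : Z2} (hl : l.1 ^ 2 + l.2 ^ 2 = 1) (hμ : 0 < μ) (hμlam : μ ≤ lam / 2)
    (hk : knorm k ≤ μ) : |dotZ k l / lam| < 1 := by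
  have hlam : 0 < lam := by linarith
  rw [abs_div, abs_of_pos hlam, div_lt_one hlam]
  linarith [abs_dotZ_le_knorm hl k]

/-- The symbol of `T1op κ lam`. -/
def T1Sym (κ : Z2) (lam : ℝ) (k : Z2) : ℂ := (((knorm (κ + k) + knorm (κ - k)) / 2 - lam : ℝ) : ℂ)

/-- The symbol of `T2op κ l`. -/
def T2Sym (κ : Z2) (l : ℝ × ℝ) (k : Z2) : ℂ :=
  Complex.I * (((knorm (κ + k) - knorm (κ - k)) / 2 - (l.1 * (k.1 : ℝ) + l.2 * (k.2 : ℝ)) : ℝ) : ℂ)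

/-- The factor of order zero that remains of `T2Sym κ l k`, with `κ = lam * l`, after removing the
cubic factor `lam⁻² (k⋅l) (k⋅l^⊥)²`. -/
def T2Remainder (l : ℝ × ℝ) (lam : ℝ) (k : Z2) : ℝ :=
  sqrtOddPart (dotZ k l / lam) (dotZ k (perp l) / lam)

lemma MultiplierBound.T2Remainder (hl : l.1 ^ 2 + l.2 ^ 2 = 1) (hμ : 0 < μ) (hμlam : μ ≤ lam / 2)
    (hS : ∀ k ∈ S, knorm k ≤ μ) : MultiplierBound S (fun k => (T2Remainder l lam k : ℂ)) 4 :=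
  sqrtOddPart (dotZ_div hμ hμlam hS hl) (dotZ_div hμ hμlam hS (perp_fst_sq_add_snd_sq hl))

lemma T1Sym_eq {k : Z2} (hl : l.1 ^ 2 + l.2 ^ 2 = 1) (hκ₁ : (κ.1 : ℝ) = lam * l.1)
    (hκ₂ : (κ.2 : ℝ) = lam * l.2) (hμ : 0 < μ) (hμlam : μ ≤ lam / 2) (hk : knorm k ≤ μ) :
    T1Sym κ lam k = ((lam⁻¹ / 2 : ℝ) : ℂ) * ((dotZ k (perp l) : ℂ) ^ 2 *
      (sqrtEvenPart (dotZ k l / lam) (dotZ k (perp l) / lam) : ℂ)) := by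
  have hlam : 0 < lam := by linarith
  have heven := sqrt_add_sqrt_half_sub_one (abs_dotZ_div_lt_one hl hμ hμlam hk)
    (dotZ k (perp l) / lam)
  rw [T1Sym, knorm_add_eq hl hlam hκ₁ hκ₂, knorm_sub_eq hl hlam hκ₁ hκ₂]
  norm_cast
  rw [← mul_add, mul_div_assoc, eq_add_of_sub_eq heven]
  field_simp
  ring

lemma T2Sym_eq {k : Z2} (hl : l.1 ^ 2 + l.2 ^ 2 = 1) (hκ₁ : (κ.1 : ℝ) = lam * l.1)
    (hκ₂ : (κ.2 : ℝ) = lam * l.2) (hμ : 0 < μ) (hμlam : μ ≤ lam / 2) (hk : knorm k ≤ μ) :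
    T2Sym κ l k = Complex.I * ((lam⁻¹ ^ 2 : ℝ) : ℂ) *
      ((dotZ k l : ℂ) * (dotZ k (perp l) : ℂ) ^ 2 * (T2Remainder l lam k : ℂ)) := by
  have hlam : 0 < lam := by linarith
  have hodd := sqrt_sub_sqrt_half_sub (abs_dotZ_div_lt_one hl hμ hμlam hk) (dotZ k (perp l) / lam)
  have hdot : l.1 * k.1 + l.2 * k.2 = dotZ k l := by rw [dotZ]; ring
  rw [T2Sym, knorm_add_eq hl hlam hκ₁ hκ₂, knorm_sub_eq hl hlam hκ₁ hκ₂, hdot, mul_assoc]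
  congr 1
  norm_cast
  rw [← mul_sub, mul_div_assoc, eq_add_of_sub_eq hodd, T2Remainder]
  field_simp
  ring

lemma MultiplierBound.T1Sym (hl : l.1 ^ 2 + l.2 ^ 2 = 1) (hκ₁ : (κ.1 : ℝ) = lam * l.1)
    (hκ₂ : (κ.2 : ℝ) = lam * l.2) (hμ : 0 < μ) (hμlam : μ ≤ lam / 2)
    (hS : ∀ k ∈ S, knorm k ≤ μ) : MultiplierBound S (T1Sym κ lam) (2 * lam⁻¹ * μ ^ 2) := by
  have hperp := perp_fst_sq_add_snd_sq hl
  have hbound := (((dotZ_of_knorm_le hμ hS hperp).pow 2).mul (sqrtEvenPart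
    (dotZ_div hμ hμlam hS hl) (dotZ_div hμ hμlam hS hperp))).const_mul ((lam⁻¹ / 2 : ℝ) : ℂ)
  refine (hbound.congr fun k hk => T1Sym_eq hl hκ₁ hκ₂ hμ hμlam (hS k hk)).mono (le_of_eq ?_)
  rw [Complex.norm_of_nonneg (div_nonneg (inv_nonneg.mpr (by linarith)) zero_le_two)]
  ring

lemma MultiplierBound.T2Sym (hl : l.1 ^ 2 + l.2 ^ 2 = 1) (hκ₁ : (κ.1 : ℝ) = lam * l.1)
    (hκ₂ : (κ.2 : ℝ) = lam * l.2) (hμ : 0 < μ) (hμlam : μ ≤ lam / 2)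
    (hS : ∀ k ∈ S, knorm k ≤ μ) : MultiplierBound S (T2Sym κ l) (4 * lam⁻¹ ^ 2 * μ ^ 3) := by
  have hperp := perp_fst_sq_add_snd_sq hl
  have hbound := (((dotZ_of_knorm_le hμ hS hl).mul ((dotZ_of_knorm_le hμ hS hperp).pow 2)).mul
    (T2Remainder hl hμ hμlam hS)).const_mul (Complex.I * ((lam⁻¹ ^ 2 : ℝ) : ℂ))
  refine (hbound.congr fun k hk => T2Sym_eq hl hκ₁ hκ₂ hμ hμlam (hS k hk)).mono (le_of_eq ?_)
  rw [norm_mul, Complex.norm_I, one_mul, Complex.norm_of_nonneg (sq_nonneg _)]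
  ring

end OperatorSymbols

section HeatSemigroup

open ProbabilityTheory

variable {S : Finset Z2} {u v w : ℝ × ℝ} {t μ : ℝ}

lemma fourierMode_smul (k : Z2) (y : ℝ) (v : ℝ × ℝ) :
    fourierMode k (y • v) = Complex.exp ((dotZ k v : ℂ) * y * Complex.I) := by
  rw [fourierMode, dotZ_smul]
  push_cast
  ring_nf

lemma charFun_gaussianReal_zero_two (ξ : ℝ) :
    charFun (gaussianReal 0 2) ξ = Complex.exp (-(ξ : ℂ) ^ 2) := by
  rw [charFun_gaussianReal]
  push_cast
  ring_nf

lemma integral_mul_exp_gaussianReal_zero_two (ξ : ℝ) :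
    ∫ y : ℝ, (y : ℂ) * Complex.exp ((ξ : ℂ) * y * Complex.I) ∂gaussianReal 0 2 =
      2 * Complex.I * ((ξ * Real.exp (-ξ ^ 2) : ℝ) : ℂ) := by
  have hexp : HasDerivAt (fun x : ℝ => Complex.exp (-(x : ℂ) ^ 2))
      (Complex.exp (-(ξ : ℂ) ^ 2) * -(2 * ξ)) ξ := by
    simpa using (((hasDerivAt_id (ξ : ℂ)).pow 2).neg.cexp).comp_ofReal
  have hLp : MemLp id (1 : ℕ) (gaussianReal 0 2) :=
    memLp_id_gaussianReal' _ (ENNReal.natCast_ne_top 1)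
  have hmoment := iteratedDeriv_charFun (t := ξ) hLp
  rw [iteratedDeriv_one, funext charFun_gaussianReal_zero_two, hexp.deriv] at hmoment
  simp only [pow_one] at hmoment
  push_cast
  linear_combination Complex.I * hmoment +
    (∫ y : ℝ, (y : ℂ) * Complex.exp ((ξ : ℂ) * y * Complex.I) ∂gaussianReal 0 2) * Complex.I_sq

lemma integral_abs_gaussianReal_zero_two_le : ∫ y : ℝ, |y| ∂gaussianReal 0 2 ≤ 3 / 2 := by
  have hLp : MemLp id 2 (gaussianReal 0 2) :=
    memLp_id_gaussianReal' 2 ENNReal.ofNat_ne_top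
  have hsqint : Integrable (fun y : ℝ => y ^ 2) (gaussianReal 0 2) := hLp.integrable_sq
  have hsq : ∫ y : ℝ, y ^ 2 ∂gaussianReal 0 2 = 2 := by
    have hvar := variance_of_integral_eq_zero (X := id) (μ := gaussianReal 0 2)
      aemeasurable_id integral_id_gaussianReal
    rw [variance_id_gaussianReal] at hvar
    exact hvar.symm
  have hint : Integrable (fun y : ℝ => (y ^ 2 + 1) / 2) (gaussianReal 0 2) :=
    (hsqint.add (integrable_const 1)).div_const 2
  calc ∫ y : ℝ, |y| ∂gaussianReal 0 2 ≤ ∫ y : ℝ, (y ^ 2 + 1) / 2 ∂gaussianReal 0 2 :=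
        integral_mono (hLp.integrable (by norm_num)).abs hint fun y => by
          nlinarith [sq_nonneg (|y| - 1), sq_abs y]
    _ = 3 / 2 := by
        rw [integral_div, integral_add hsqint (integrable_const 1), hsq]
        norm_num

namespace MultiplierBound

lemma exp_neg_dotZ_sq (S : Finset Z2) (v : ℝ × ℝ) :
    MultiplierBound S (fun k => ((Real.exp (-dotZ k v ^ 2) : ℝ) : ℂ)) 1 := by
  have haverage := integral (ρ := gaussianReal 0 2) (u := fun (y : ℝ) k => fourierMode k (y • v))
    (ae_of_all _ fun y => translation S (y • v)) (fun k _ => ?_) (integrable_const 1)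
  · refine (haverage.congr fun k _ => ?_).mono (by simp)
    simp only [fourierMode_smul]
    rw [← charFun_apply_real, charFun_gaussianReal_zero_two]
    push_cast
    rfl
  · exact (integrable_const (1 : ℝ)).mono' (by unfold fourierMode dotZ; fun_prop)
      (ae_of_all _ fun y => (norm_fourierMode k _).le)

lemma dotZ_mul_exp_neg_dotZ_sq (S : Finset Z2) (v : ℝ × ℝ) :
    MultiplierBound S (fun k => ((dotZ k v * Real.exp (-dotZ k v ^ 2) : ℝ) : ℂ)) 1 := by
  have hLp : MemLp id 1 (gaussianReal 0 2) :=
    memLp_id_gaussianReal' 1 ENNReal.one_ne_top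
  have haverage := integral (ρ := gaussianReal 0 2)
    (u := fun (y : ℝ) k => (y : ℂ) * fourierMode k (y • v)) (c := fun y => |y|)
    (ae_of_all _ fun y => ((translation S (y • v)).const_mul (y : ℂ)).mono (by simp))
    (fun k _ => ?_) (hLp.integrable le_rfl).abs
  · refine ((haverage.const_mul (-Complex.I / 2)).congr fun k _ => ?_).mono ?_
    · simp only [fourierMode_smul]
      rw [integral_mul_exp_gaussianReal_zero_two]
      linear_combination (((dotZ k v * Real.exp (-dotZ k v ^ 2) : ℝ) : ℂ)) * Complex.I_sq
    · rw [norm_div, norm_neg, Complex.norm_I, Complex.norm_ofNat]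
      linarith [integral_abs_gaussianReal_zero_two_le]
  · refine (hLp.integrable le_rfl).abs.mono' (by unfold fourierMode dotZ; fun_prop)
      (ae_of_all _ fun y => ?_)
    rw [norm_mul, norm_fourierMode, mul_one, Complex.norm_real]
    exact le_rfl

lemma dotZ_mul_exp_neg_mul_knorm_sq (S : Finset Z2) (ht : 0 < t) (hv : v.1 ^ 2 + v.2 ^ 2 = 1) :
    MultiplierBound S (fun k => ((dotZ k v * Real.exp (-(t * knorm k ^ 2)) : ℝ) : ℂ)) (√t)⁻¹ := by
  have hsqrt : 0 < √t := Real.sqrt_pos.mpr ht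
  have hbound := ((dotZ_mul_exp_neg_dotZ_sq S (√t • v)).mul
    (exp_neg_dotZ_sq S (√t • perp v))).const_mul (((√t)⁻¹ : ℝ) : ℂ)
  rw [Complex.norm_of_nonneg (inv_nonneg.mpr hsqrt.le), mul_one, mul_one] at hbound
  refine hbound.congr fun k _ => ?_
  norm_cast
  rw [← dotZ_sq_add_dotZ_perp_sq hv, mul_assoc, ← Real.exp_add, dotZ_smul, dotZ_smul, mul_pow,
    mul_pow, Real.sq_sqrt ht.le, mul_assoc, inv_mul_cancel_left₀ hsqrt.ne']
  ring_nf

lemma exp_neg_mul_knorm_sq (S : Finset Z2) (ht : 0 ≤ t) :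
    MultiplierBound S (fun k => ((Real.exp (-(t * knorm k ^ 2)) : ℝ) : ℂ)) 1 := by
  have hbound := (exp_neg_dotZ_sq S (√t • (1, 0))).mul (exp_neg_dotZ_sq S (√t • (0, 1)))
  rw [mul_one] at hbound
  refine hbound.congr fun k _ => ?_
  norm_cast
  rw [← Real.exp_add, dotZ_smul, dotZ_smul, mul_pow, mul_pow, Real.sq_sqrt ht, knorm_sq, dotZ,
    dotZ]
  ring_nf

end MultiplierBound

/-- A cubic symbol, the product of three linear ones. Divided by `|k|²` it has order one, which is
the form in which `Δ⁻¹` and the multipliers `R_j^o` are estimated. -/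
def cubicSym (u v w : ℝ × ℝ) (k : Z2) : ℝ := dotZ k u * dotZ k v * dotZ k w

lemma cubicSym_zero (u v w : ℝ × ℝ) : cubicSym u v w 0 = 0 := by simp [cubicSym, dotZ]

lemma integrableOn_cubicSym_mul_exp (u v w : ℝ × ℝ) (k : Z2) :
    IntegrableOn (fun t => 3 * cubicSym u v w k * Real.exp (-(3 * knorm k ^ 2) * t))
      (Set.Ioi 0) := by
  rcases eq_or_ne k 0 with rfl | hk
  · simp only [cubicSym_zero, mul_zero, zero_mul, integrableOn_zero]
  · exact (integrableOn_exp_mul_Ioi (by linarith [knorm_sq_pos hk]) 0).const_mul _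

lemma integral_cubicSym_mul_exp (u v w : ℝ × ℝ) (k : Z2) :
    ∫ t in Set.Ioi (0 : ℝ), 3 * cubicSym u v w k * Real.exp (-(3 * knorm k ^ 2) * t) =
      cubicSym u v w k / knorm k ^ 2 := by
  rcases eq_or_ne k 0 with rfl | hk
  · simp only [cubicSym_zero, mul_zero, zero_mul, integral_zero, zero_div]
  · have hpos := knorm_sq_pos hk
    rw [integral_const_mul, integral_exp_mul_Ioi (by linarith), mul_zero, Real.exp_zero]
    field_simp

lemma inv_sqrt_cube_eq_rpow (ht : 0 < t) : (√t)⁻¹ ^ 3 = t ^ (-3 / 2 : ℝ) := by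
  rw [Real.sqrt_eq_rpow, ← Real.rpow_neg ht.le, ← Real.rpow_natCast, ← Real.rpow_mul ht.le]
  norm_num

lemma integrableOn_inv_sqrt_cube (ht : 0 < t) :
    IntegrableOn (fun s : ℝ => (√s)⁻¹ ^ 3) (Set.Ioi t) :=
  (integrableOn_Ioi_rpow_of_lt (by norm_num) ht).congr_fun
    (fun _ hs => (inv_sqrt_cube_eq_rpow (ht.trans hs)).symm) measurableSet_Ioi

lemma integral_inv_sqrt_cube (ht : 0 < t) : ∫ s in Set.Ioi t, (√s)⁻¹ ^ 3 = 2 * (√t)⁻¹ := by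
  rw [setIntegral_congr_fun measurableSet_Ioi fun s hs => inv_sqrt_cube_eq_rpow (ht.trans hs),
    integral_Ioi_rpow_of_lt (by norm_num) ht, Real.sqrt_eq_rpow, ← Real.rpow_neg ht.le]
  norm_num
  ring

namespace MultiplierBound

lemma cubicSym_mul_exp_le_cube (hμ : 0 < μ) (hS : ∀ k ∈ S, knorm k ≤ μ)
    (hu : u.1 ^ 2 + u.2 ^ 2 = 1) (hv : v.1 ^ 2 + v.2 ^ 2 = 1) (hw : w.1 ^ 2 + w.2 ^ 2 = 1)
    (ht : 0 ≤ t) :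
    MultiplierBound S
      (fun k => ((3 * cubicSym u v w k * Real.exp (-(3 * knorm k ^ 2) * t) : ℝ) : ℂ))
      (3 * μ ^ 3) := by
  have hbound := ((((dotZ_of_knorm_le hμ hS hu).mul (dotZ_of_knorm_le hμ hS hv)).mul
    (dotZ_of_knorm_le hμ hS hw)).mul
      (exp_neg_mul_knorm_sq S (mul_nonneg zero_le_three ht))).const_mul 3
  refine (hbound.congr fun k _ => ?_).mono (le_of_eq ?_)
  · have hexp : -(3 * knorm k ^ 2) * t = -(3 * t * knorm k ^ 2) := by ring
    rw [cubicSym, hexp]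
    push_cast
    ring
  · rw [Complex.norm_ofNat]
    ring

lemma cubicSym_mul_exp_le_inv_sqrt_cube (S : Finset Z2) (hu : u.1 ^ 2 + u.2 ^ 2 = 1)
    (hv : v.1 ^ 2 + v.2 ^ 2 = 1) (hw : w.1 ^ 2 + w.2 ^ 2 = 1) (ht : 0 < t) :
    MultiplierBound S
      (fun k => ((3 * cubicSym u v w k * Real.exp (-(3 * knorm k ^ 2) * t) : ℝ) : ℂ))
      (3 * (√t)⁻¹ ^ 3) := by
  have hbound := (((dotZ_mul_exp_neg_mul_knorm_sq S ht hu).mul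
    (dotZ_mul_exp_neg_mul_knorm_sq S ht hv)).mul
      (dotZ_mul_exp_neg_mul_knorm_sq S ht hw)).const_mul 3
  refine (hbound.congr fun k _ => ?_).mono (le_of_eq ?_)
  · have hexp : Real.exp (-(3 * knorm k ^ 2) * t) = Real.exp (-(t * knorm k ^ 2)) ^ 3 := by
      rw [← Real.exp_nat_mul]
      push_cast
      ring_nf
    rw [cubicSym, hexp]
    push_cast
    ring
  · rw [Complex.norm_ofNat]
    ring

-- Write `1 / |k|²` as the integral over `t > 0` of `3 exp (-3t|k|²)`. Below `t = μ⁻²` Bernstein's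
-- inequality controls the three linear factors; above, each of them is absorbed by its own copy of
-- `exp (-t|k|²)` at the price `t^(-1/2)`.
lemma cubicSym_div_knorm_sq (hμ : 0 < μ) (hS : ∀ k ∈ S, knorm k ≤ μ)
    (hu : u.1 ^ 2 + u.2 ^ 2 = 1) (hv : v.1 ^ 2 + v.2 ^ 2 = 1) (hw : w.1 ^ 2 + w.2 ^ 2 = 1) :
    MultiplierBound S (fun k => ((cubicSym u v w k / knorm k ^ 2 : ℝ) : ℂ)) (9 * μ) := by
  have hT : 0 < (μ ^ 2)⁻¹ := by positivity
  have hint : ∀ k, IntegrableOn (fun t : ℝ =>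
      ((3 * cubicSym u v w k * Real.exp (-(3 * knorm k ^ 2) * t) : ℝ) : ℂ)) (Set.Ioi 0) :=
    fun k => (integrableOn_cubicSym_mul_exp u v w k).ofReal
  have hint_low := fun k => (hint k).mono_set (Set.Ioc_subset_Ioi_self (b := 0) (a := (μ ^ 2)⁻¹))
  have hint_high := fun k => (hint k).mono_set (Set.Ioi_subset_Ioi hT.le)
  have hlow := integral
    (ae_restrict_of_forall_mem measurableSet_Ioc fun (t : ℝ) (ht : t ∈ Set.Ioc 0 (μ ^ 2)⁻¹) =>
      cubicSym_mul_exp_le_cube hμ hS hu hv hw ht.1.le)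
    (fun k _ => hint_low k) (integrable_const _)
  have hhigh := integral
    (ae_restrict_of_forall_mem measurableSet_Ioi fun (t : ℝ) (ht : t ∈ Set.Ioi (μ ^ 2)⁻¹) =>
      cubicSym_mul_exp_le_inv_sqrt_cube S hu hv hw (hT.trans ht))
    (fun k _ => hint_high k) ((integrableOn_inv_sqrt_cube hT).const_mul 3)
  refine ((hlow.add hhigh).congr fun k _ => ?_).mono (le_of_eq ?_)
  · rw [← setIntegral_union Set.Ioc_disjoint_Ioi_same measurableSet_Ioi (hint_low k) (hint_high k),
      Set.Ioc_union_Ioi_eq_Ioi hT.le, integral_complex_ofReal, integral_cubicSym_mul_exp]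
  · rw [setIntegral_const, integral_const_mul, integral_inv_sqrt_cube hT,
      Real.volume_real_Ioc_of_le hT.le, Real.sqrt_inv, Real.sqrt_sq hμ.le, inv_inv, sub_zero,
      smul_eq_mul]
    field_simp
    ring

end MultiplierBound

end HeatSemigroup

section XNorm

variable {S : Finset Z2} {l e v : ℝ × ℝ} {lam μ c : ℝ} {κ : Z2} {m : Z2 → ℂ}

lemma deltaInvSym_eq (k : Z2) : deltaInvSym k = -((knorm k ^ 2 : ℝ) : ℂ)⁻¹ := by
  rw [deltaInvSym, neg_div, one_div]
  split_ifs with hk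
  · simp [hk, knorm]
  · rfl

lemma dotZ_mul_RoSym_zero (v : ℝ × ℝ) (k : Z2) :
    dotZ k v * RoSym 0 k = 25 / 12 * (cubicSym v (0, 1) (0, 1) k / knorm k ^ 2) +
      -(25 / 12) * (cubicSym v (1, 0) (1, 0) k / knorm k ^ 2) := by
  rcases eq_or_ne k 0 with rfl | hk
  · simp [RoSym, cubicSym_zero]
  · have hpos := knorm_sq_pos hk
    rw [knorm_sq] at hpos ⊢
    simp only [RoSym, if_neg hk, if_pos, cubicSym, dotZ]
    field_simp
    ring

lemma dotZ_mul_RoSym_one (v : ℝ × ℝ) (k : Z2) :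
    dotZ k v * RoSym 1 k = 7 / 12 * (cubicSym v (0, 1) (0, 1) k / knorm k ^ 2) +
      -(7 / 12) * (cubicSym v (1, 0) (1, 0) k / knorm k ^ 2) +
        4 * (cubicSym v (1, 0) (0, 1) k / knorm k ^ 2) := by
  rcases eq_or_ne k 0 with rfl | hk
  · simp [RoSym, cubicSym_zero]
  · have hpos := knorm_sq_pos hk
    rw [knorm_sq] at hpos ⊢
    simp only [RoSym, if_neg hk, if_neg one_ne_zero, cubicSym, dotZ]
    field_simp
    ring

namespace MultiplierBound

lemma dotZ_mul_RoSym_zero (hμ : 0 < μ) (hS : ∀ k ∈ S, knorm k ≤ μ) (hv : v.1 ^ 2 + v.2 ^ 2 = 1) :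
    MultiplierBound S (fun k => (dotZ k v : ℂ) * (RoSym 0 k : ℂ)) (75 / 2 * μ) := by
  have hbound := ((cubicSym_div_knorm_sq hμ hS hv (v := (0, 1)) (w := (0, 1)) (by norm_num)
    (by norm_num)).const_mul (25 / 12)).add ((cubicSym_div_knorm_sq hμ hS hv (v := (1, 0))
      (w := (1, 0)) (by norm_num) (by norm_num)).const_mul (-(25 / 12)))
  refine (hbound.congr fun k _ => ?_).mono (le_of_eq ?_)
  · rw [← Complex.ofReal_mul, _root_.dotZ_mul_RoSym_zero]
    push_cast
    rfl
  · norm_num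
    ring

lemma dotZ_mul_RoSym_one (hμ : 0 < μ) (hS : ∀ k ∈ S, knorm k ≤ μ) (hv : v.1 ^ 2 + v.2 ^ 2 = 1) :
    MultiplierBound S (fun k => (dotZ k v : ℂ) * (RoSym 1 k : ℂ)) (93 / 2 * μ) := by
  have hbound := (((cubicSym_div_knorm_sq hμ hS hv (v := (0, 1)) (w := (0, 1)) (by norm_num)
    (by norm_num)).const_mul (7 / 12)).add ((cubicSym_div_knorm_sq hμ hS hv (v := (1, 0))
      (w := (1, 0)) (by norm_num) (by norm_num)).const_mul (-(7 / 12)))).add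
        ((cubicSym_div_knorm_sq hμ hS hv (v := (1, 0)) (w := (0, 1)) (by norm_num)
          (by norm_num)).const_mul 4)
  refine (hbound.congr fun k _ => ?_).mono (le_of_eq ?_)
  · rw [← Complex.ofReal_mul, _root_.dotZ_mul_RoSym_one]
    push_cast
    rfl
  · norm_num
    ring

-- Of the two factors `k⋅l^⊥` in the symbol of `T2op`, one goes with `Δ⁻¹ ∂_e` into a cubic symbol
-- over `|k|²`, and the other one is paired with `m`.
lemma mul_deltaInvSym_mul_T2Sym (hl : l.1 ^ 2 + l.2 ^ 2 = 1) (hκ₁ : (κ.1 : ℝ) = lam * l.1)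
    (hκ₂ : (κ.2 : ℝ) = lam * l.2) (hμ : 0 < μ) (hμlam : μ ≤ lam / 2) (hS : ∀ k ∈ S, knorm k ≤ μ)
    (he : e.1 ^ 2 + e.2 ^ 2 = 1)
    (hm : MultiplierBound S (fun k => (dotZ k (perp l) : ℂ) * m k) c) :
    MultiplierBound S
      (fun k => m k * (deltaInvSym k * (Complex.I * (dotZ k e : ℂ) * _root_.T2Sym κ l k)))
      (36 * lam⁻¹ ^ 2 * μ * c) := by
  have hbound := (((cubicSym_div_knorm_sq hμ hS he hl (perp_fst_sq_add_snd_sq hl)).mul hm).mul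
    (T2Remainder hl hμ hμlam hS)).const_mul ((lam⁻¹ ^ 2 : ℝ) : ℂ)
  refine (hbound.congr fun k hk => ?_).mono (le_of_eq ?_)
  · rw [deltaInvSym_eq, T2Sym_eq hl hκ₁ hκ₂ hμ hμlam (hS k hk), cubicSym, div_eq_mul_inv]
    push_cast
    linear_combination -((lam : ℂ)⁻¹ ^ 2 * m k * ((knorm k : ℂ) ^ 2)⁻¹ * dotZ k e * dotZ k l *
      dotZ k (perp l) ^ 2 * _root_.T2Remainder l lam k) * Complex.I_sq
  · rw [Complex.norm_of_nonneg (sq_nonneg _)]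
    ring

end MultiplierBound

lemma Xnorm_deltaInv_dirD_T2op_trigPoly_le (hl : l.1 ^ 2 + l.2 ^ 2 = 1)
    (hκ₁ : (κ.1 : ℝ) = lam * l.1) (hκ₂ : (κ.2 : ℝ) = lam * l.2) (hμ : 0 < μ) (hμlam : μ ≤ lam / 2)
    (hS : ∀ k ∈ S, knorm k ≤ μ) (he : e.1 ^ 2 + e.2 ^ 2 = 1) (a : Z2 → ℂ) :
    Xnorm (Tmult deltaInvSym (dirD e (T2op κ l (trigPoly S a)))) ≤
      3060 * lam⁻¹ ^ 2 * μ ^ 2 * supNorm (trigPoly S a) := by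
  have hperp := perp_fst_sq_add_snd_sq hl
  have hsymbol : ∀ m : Z2 → ℂ, ∀ c, MultiplierBound S (fun k => (dotZ k (perp l) : ℂ) * m k) c →
      supNorm (trigPoly S fun k =>
        m k * (deltaInvSym k * (Complex.I * (dotZ k e : ℂ) * (T2Sym κ l k * a k)))) ≤
          36 * lam⁻¹ ^ 2 * μ * c * supNorm (trigPoly S a) := fun m c hm => by
    simpa only [mul_assoc] using
      (hm.mul_deltaInvSym_mul_T2Sym hl hκ₁ hκ₂ hμ hμlam hS he).supNorm_le a
  have hid := hsymbol 1 μ (by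
    simpa only [Pi.one_apply, mul_one] using MultiplierBound.dotZ_of_knorm_le hμ hS hperp)
  have hRo₀ := hsymbol _ _ (MultiplierBound.dotZ_mul_RoSym_zero hμ hS hperp)
  have hRo₁ := hsymbol _ _ (MultiplierBound.dotZ_mul_RoSym_one hμ hS hperp)
  simp only [Pi.one_apply, one_mul] at hid
  have hT2 : T2op κ l = Tmult (T2Sym κ l) := rfl
  rw [Xnorm, Ro, Ro, hT2, Tmult_trigPoly, dirD_trigPoly, Tmult_trigPoly, Tmult_trigPoly,
    Tmult_trigPoly]
  linarith

end XNorm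

section BandLimitedFunctions

variable {l : ℝ × ℝ} {lam μ : ℝ} {κ : Z2} {b₀ : ℝ × ℝ → ℂ}

lemma finite_setOf_knorm_le (μ : ℝ) : {k : Z2 | knorm k ≤ μ}.Finite := by
  refine (Set.finite_Icc (-⌈μ⌉, -⌈μ⌉) (⌈μ⌉, ⌈μ⌉)).subset fun k (hk : knorm k ≤ μ) => ?_
  have hcoord : ∀ n : ℤ, (n : ℝ) ^ 2 ≤ knorm k ^ 2 → |n| ≤ ⌈μ⌉ := fun n hn => by
    exact_mod_cast (abs_le_of_sq_le_sq hn (Real.sqrt_nonneg _)).trans (hk.trans (Int.le_ceil μ))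
  have hfst := abs_le.mp (hcoord k.1 (by rw [knorm_sq]; exact le_add_of_nonneg_right (sq_nonneg _)))
  have hsnd := abs_le.mp (hcoord k.2 (by rw [knorm_sq]; exact le_add_of_nonneg_left (sq_nonneg _)))
  exact ⟨⟨hfst.1, hsnd.1⟩, ⟨hfst.2, hsnd.2⟩⟩

lemma exists_eq_trigPoly_of_knorm_le (hb : Continuous b₀) (hper : Periodic2 b₀)
    (hsupp : ∀ k, μ < knorm k → fCoeff b₀ k = 0) :
    ∃ S : Finset Z2, (∀ k ∈ S, knorm k ≤ μ) ∧ ∃ a, b₀ = trigPoly S a := by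
  refine ⟨(finite_setOf_knorm_le μ).toFinset, fun k hk => by simpa using hk, fCoeff b₀, ?_⟩
  exact eq_trigPoly_of_fCoeff_eq_zero hb hper fun k hk => hsupp k (by simpa using hk)

lemma norm_T1op_le (hl : l.1 ^ 2 + l.2 ^ 2 = 1) (hκ₁ : (κ.1 : ℝ) = lam * l.1)
    (hκ₂ : (κ.2 : ℝ) = lam * l.2) (hμ : 0 < μ) (hμlam : μ ≤ lam / 2) (hb : Continuous b₀)
    (hper : Periodic2 b₀) (hsupp : ∀ k, μ < knorm k → fCoeff b₀ k = 0) (x : ℝ × ℝ) :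
    ‖T1op κ lam b₀ x‖ ≤ 2 * lam⁻¹ * μ ^ 2 * supNorm b₀ := by
  obtain ⟨S, hS, a, rfl⟩ := exists_eq_trigPoly_of_knorm_le hb hper hsupp
  have hT1 : T1op κ lam = Tmult (T1Sym κ lam) := rfl
  rw [hT1, Tmult_trigPoly]
  exact (MultiplierBound.T1Sym hl hκ₁ hκ₂ hμ hμlam hS).norm_le_supNorm a x

lemma norm_T2op_le (hl : l.1 ^ 2 + l.2 ^ 2 = 1) (hκ₁ : (κ.1 : ℝ) = lam * l.1)
    (hκ₂ : (κ.2 : ℝ) = lam * l.2) (hμ : 0 < μ) (hμlam : μ ≤ lam / 2) (hb : Continuous b₀)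
    (hper : Periodic2 b₀) (hsupp : ∀ k, μ < knorm k → fCoeff b₀ k = 0) (x : ℝ × ℝ) :
    ‖T2op κ l b₀ x‖ ≤ 4 * lam⁻¹ ^ 2 * μ ^ 3 * supNorm b₀ := by
  obtain ⟨S, hS, a, rfl⟩ := exists_eq_trigPoly_of_knorm_le hb hper hsupp
  have hT2 : T2op κ l = Tmult (T2Sym κ l) := rfl
  rw [hT2, Tmult_trigPoly]
  exact (MultiplierBound.T2Sym hl hκ₁ hκ₂ hμ hμlam hS).norm_le_supNorm a x

lemma Xnorm_deltaInv_pd_T2op_le (hl : l.1 ^ 2 + l.2 ^ 2 = 1) (hκ₁ : (κ.1 : ℝ) = lam * l.1)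
    (hκ₂ : (κ.2 : ℝ) = lam * l.2) (hμ : 0 < μ) (hμlam : μ ≤ lam / 2) (hb : Continuous b₀)
    (hper : Periodic2 b₀) (hsupp : ∀ k, μ < knorm k → fCoeff b₀ k = 0) (j : Fin 2) :
    Xnorm (Tmult deltaInvSym (pd j (T2op κ l b₀))) ≤ 3060 * lam⁻¹ ^ 2 * μ ^ 2 * supNorm b₀ := by
  obtain ⟨S, hS, a, rfl⟩ := exists_eq_trigPoly_of_knorm_le hb hper hsupp
  refine Xnorm_deltaInv_dirD_T2op_trigPoly_le hl hκ₁ hκ₂ hμ hμlam hS ?_ a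
  split_ifs <;> norm_num

end BandLimitedFunctions

lemma Xnorm_nonneg (q : ℝ × ℝ → ℂ) : 0 ≤ Xnorm q :=
  add_nonneg (add_nonneg (supNorm_nonneg _) (supNorm_nonneg _)) (supNorm_nonneg _)

theorem stmt12_general : ∃ C : ℝ, ∀ (l : ℝ × ℝ) (lam μ : ℝ) (κ : Z2) (b₀ : ℝ × ℝ → ℂ),
    l.1 ^ 2 + l.2 ^ 2 = 1 → (κ.1 : ℝ) = lam * l.1 → (κ.2 : ℝ) = lam * l.2 →
    0 < μ → μ ≤ lam / 2 → Continuous b₀ → Periodic2 b₀ →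
    (∀ k : Z2, μ < knorm k → fCoeff b₀ k = 0) →
    (∀ x, ‖T1op κ lam b₀ x‖ ≤ C * lam⁻¹ * μ ^ 2 * supNorm b₀) ∧
    (∀ x, ‖T2op κ l b₀ x‖ ≤ C * lam⁻¹ ^ 2 * μ ^ 3 * supNorm b₀) ∧
    Xnorm (Tmult deltaInvSym (pd 0 (T2op κ l b₀)))
        + Xnorm (Tmult deltaInvSym (pd 1 (T2op κ l b₀)))
      ≤ C * supNorm b₀ * lam⁻¹ ^ 2 * μ ^ 2 := by
  refine ⟨6120, fun l lam μ κ b₀ hl hκ₁ hκ₂ hμ hμlam hb hper hsupp => ?_⟩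
  have hN := supNorm_nonneg b₀
  have hlam : 0 < lam := by linarith
  refine ⟨fun x => (norm_T1op_le hl hκ₁ hκ₂ hμ hμlam hb hper hsupp x).trans ?_,
    fun x => (norm_T2op_le hl hκ₁ hκ₂ hμ hμlam hb hper hsupp x).trans ?_, ?_⟩
  · gcongr
    norm_num
  · gcongr
    norm_num
  · have hX := Xnorm_deltaInv_pd_T2op_le hl hκ₁ hκ₂ hμ hμlam hb hper hsupp
    linarith [hX 0, hX 1]

lemma one_le_log_of_three_le {x : ℝ} (hx : 3 ≤ x) : 1 ≤ Real.log x := by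
  rw [Real.le_log_iff_exp_le (by linarith)]
  linarith [Real.exp_one_lt_d9]

/-- Lemma A.2: for `|l| = 1`, `λl ∈ ℤ²`, `10 ≤ μ ≤ λ/2` and `b₀` real with
Fourier support in `{|k| ≤ μ}`:
`‖T¹_{λl} b₀‖_∞ ≤ C λ⁻¹ μ² ‖b₀‖_∞`, `‖T²_{λl} b₀‖_∞ ≤ C λ⁻² μ³ ‖b₀‖_∞`, and
`‖Δ⁻¹∇ T²_{λl} b₀‖_X ≤ C ‖b₀‖_∞ λ⁻² μ² log μ`. -/
theorem stmt12 : ∃ C : ℝ, ∀ (l : ℝ × ℝ) (lam μ : ℝ) (κ : Z2) (b₀ : ℝ × ℝ → ℂ),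
    l.1 ^ 2 + l.2 ^ 2 = 1 → 0 < lam → (κ.1 : ℝ) = lam * l.1 → (κ.2 : ℝ) = lam * l.2 →
    10 ≤ μ → μ ≤ lam / 2 →
    ContDiff ℝ (⊤ : ℕ∞) b₀ → Periodic2 b₀ → RealValued b₀ →
    (∀ k : Z2, μ < knorm k → fCoeff b₀ k = 0) →
    (∀ x, ‖T1op κ lam b₀ x‖ ≤ C * lam⁻¹ * μ ^ 2 * supNorm b₀) ∧
    (∀ x, ‖T2op κ l b₀ x‖ ≤ C * lam⁻¹ ^ 2 * μ ^ 3 * supNorm b₀) ∧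
    Xnorm (Tmult deltaInvSym (pd 0 (T2op κ l b₀)))
        + Xnorm (Tmult deltaInvSym (pd 1 (T2op κ l b₀)))
      ≤ C * supNorm b₀ * lam⁻¹ ^ 2 * μ ^ 2 * Real.log μ := by
  obtain ⟨C, hC⟩ := stmt12_general
  refine ⟨C, fun l lam μ κ b₀ hl _ hκ₁ hκ₂ hμ hμlam hb hper _ hsupp => ?_⟩
  have ⟨hT1, hT2, hX⟩ := hC l lam μ κ b₀ hl hκ₁ hκ₂ (by linarith) hμlam hb.continuous hper hsupp
  have hlog : 1 ≤ Real.log μ := one_le_log_of_three_le (by linarith)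
  have hX_rhs_nonneg := (add_nonneg (Xnorm_nonneg _) (Xnorm_nonneg _)).trans hX
  exact ⟨hT1, hT2, hX.trans (le_mul_of_one_le_right hX_rhs_nonneg hlog)⟩

end
end

section
/- Let R = R_j (j = 1 or 2) be a Riesz transform on 𝕋². Then there is a constant C such that for every φ ∈ H³(𝕋²) and every mean-zero θ ∈ Ḣ^{−1/2}(𝕋²), the commutator [R, φ]θ = R(φθ) − φ Rθ belongs to Ḣ^{1/2}(𝕋²) and ‖[R, φ]θ‖_{Ḣ^{1/2}} ≤ C ‖φ‖_{Ḣ³} ‖θ‖_{Ḣ^{−1/2}}. -/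
open MeasureTheory Complex Filter
open scoped ENNReal NNReal

noncomputable section

/-!
The symbol of `R_j` is, up to the factor `i`, a coordinate of the normalized frequency, so it varies
by at most `2 |k - l| / (|k|^{1/2} |l|^{1/2})` between `k` and `l`. Hence `|k|^{1/2}` times the `k`-th
coefficient of `[R_j, φ]θ` is bounded by twice the convolution of `|k| |φ̂(k)|` with
`|k|^{-1/2} |θ̂(k)|`. Young's inequality `ℓ¹ * ℓ² ⊆ ℓ²` controls this convolution by `∑ |k| |φ̂(k)|`
and `‖θ‖_{Ḣ^{-1/2}}`, and the sum `∑ |k| |φ̂(k)|` is finite for `φ ∈ Ḣ^s` with `s > 2` by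
Cauchy–Schwarz, since `∑ |k|^{2 - 2s}` converges over the nonzero points of `ℤ²`.
-/

section Normalize

variable {V : Type*} [NormedAddCommGroup V] [NormedSpace ℝ V]

lemma norm_mul_norm_normalize_sub_le (x y : V) :
    ‖x‖ * ‖NormedSpace.normalize x - NormedSpace.normalize y‖ ≤ 2 * ‖x - y‖ := by
  have decomposition :
      ‖x‖ • (NormedSpace.normalize x - NormedSpace.normalize y) = (x - y) + (‖y‖ - ‖x‖) • NormedSpace.normalize y := by
    rw [smul_sub, sub_smul, NormedSpace.norm_smul_normalize, NormedSpace.norm_smul_normalize]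
    abel
  have normalize_le : ‖NormedSpace.normalize y‖ ≤ 1 := by
    rcases eq_or_ne y 0 with rfl | hy
    · simp
    · exact (NormedSpace.norm_normalize hy).le
  calc ‖x‖ * ‖NormedSpace.normalize x - NormedSpace.normalize y‖
      = ‖(x - y) + (‖y‖ - ‖x‖) • NormedSpace.normalize y‖ := by
        rw [← decomposition, norm_smul, norm_norm]
    _ ≤ ‖x - y‖ + |‖y‖ - ‖x‖| * ‖NormedSpace.normalize y‖ := by
        rw [← Real.norm_eq_abs, ← norm_smul]
        exact norm_add_le _ _
    _ ≤ ‖x - y‖ + ‖x - y‖ * 1 := by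
        gcongr
        rw [norm_sub_rev x y]
        exact abs_norm_sub_norm_le y x
    _ = 2 * ‖x - y‖ := by ring

lemma sqrt_norm_mul_sqrt_norm_mul_norm_normalize_sub_le (x y : V) :
    √‖x‖ * √‖y‖ * ‖NormedSpace.normalize x - NormedSpace.normalize y‖ ≤ 2 * ‖x - y‖ := by
  have hx := norm_mul_norm_normalize_sub_le x y
  have hy := norm_mul_norm_normalize_sub_le y x
  rw [norm_sub_rev, norm_sub_rev y x] at hy
  set d := ‖NormedSpace.normalize x - NormedSpace.normalize y‖
  calc √‖x‖ * √‖y‖ * d = √(‖x‖ * d) * √(‖y‖ * d) := by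
        rw [Real.sqrt_mul (norm_nonneg x), Real.sqrt_mul (norm_nonneg y), mul_mul_mul_comm,
          Real.mul_self_sqrt (norm_nonneg _)]
    _ ≤ √(2 * ‖x - y‖) * √(2 * ‖x - y‖) := by gcongr
    _ = 2 * ‖x - y‖ := Real.mul_self_sqrt (by positivity)

end Normalize

section Series

variable {ι : Type*}

lemma summable_mul_of_summable_sq {f g : ι → ℝ} (hf : Summable fun i => f i ^ 2)
    (hg : Summable fun i => g i ^ 2) : Summable fun i => f i * g i := by
  refine Summable.of_abs ?_
  simp only [abs_mul]
  exact Real.summable_mul_of_Lp_Lq_of_nonneg Real.HolderConjugate.two_two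
    (fun i => abs_nonneg (f i)) (fun i => abs_nonneg (g i))
    (by simpa only [Real.rpow_two, sq_abs] using hf)
    (by simpa only [Real.rpow_two, sq_abs] using hg)

lemma abs_tsum_mul_le_sqrt_mul_sqrt {f g : ι → ℝ} (hf : Summable fun i => f i ^ 2)
    (hg : Summable fun i => g i ^ 2) :
    |∑' i, f i * g i| ≤ √(∑' i, f i ^ 2) * √(∑' i, g i ^ 2) := by
  have holder := Real.inner_le_Lp_mul_Lq_tsum_of_nonneg Real.HolderConjugate.two_two
    (fun i => abs_nonneg (f i)) (fun i => abs_nonneg (g i))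
    (by simpa only [Real.rpow_two, sq_abs] using hf)
    (by simpa only [Real.rpow_two, sq_abs] using hg)
  simp only [Real.rpow_two, sq_abs, ← Real.sqrt_eq_rpow, ← abs_mul] at holder
  exact (norm_tsum_le_tsum_norm (summable_mul_of_summable_sq hf hg).norm).trans holder

lemma summable_mul_of_summable_mul_sq {w b : ι → ℝ} (hw : ∀ i, 0 ≤ w i)
    (hsw : Summable w) (hsb : Summable fun i => w i * b i ^ 2) :
    Summable fun i => w i * b i := by
  have h := summable_mul_of_summable_sq (f := fun i => √(w i)) (g := fun i => √(w i) * b i)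
    (by simpa only [Real.sq_sqrt (hw _)] using hsw)
    (by simpa only [mul_pow, Real.sq_sqrt (hw _)] using hsb)
  simpa only [← mul_assoc, Real.mul_self_sqrt (hw _)] using h

lemma sq_tsum_mul_le_tsum_mul_tsum_mul_sq {w b : ι → ℝ} (hw : ∀ i, 0 ≤ w i)
    (hsw : Summable w) (hsb : Summable fun i => w i * b i ^ 2) :
    (∑' i, w i * b i) ^ 2 ≤ (∑' i, w i) * ∑' i, w i * b i ^ 2 := by
  have h := abs_tsum_mul_le_sqrt_mul_sqrt (f := fun i => √(w i)) (g := fun i => √(w i) * b i)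
    (by simpa only [Real.sq_sqrt (hw _)] using hsw)
    (by simpa only [mul_pow, Real.sq_sqrt (hw _)] using hsb)
  simp only [← mul_assoc, Real.mul_self_sqrt (hw _), mul_pow, Real.sq_sqrt (hw _)] at h
  rw [← Real.sqrt_mul (tsum_nonneg hw)] at h
  exact (Real.sq_le (mul_nonneg (tsum_nonneg hw)
    (tsum_nonneg fun i => mul_nonneg (hw i) (sq_nonneg (b i))))).2 (abs_le.1 h)

end Series

section Convolution

variable {G : Type*} [AddGroup G] {a b : G → ℝ}

lemma summable_prod_convolution (ha : Summable a) (hb : Summable b) :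
    Summable fun p : G × G => a (p.1 - p.2) * b p.2 := by
  have shear : Summable fun p : G × G => b p.1 * a (p.2 - p.1) :=
    ((Equiv.refl G).prodShear Equiv.subRight).summable_iff.2
      (summable_mul_of_summable_norm hb.norm ha.norm)
  simpa only [Prod.fst_swap, Prod.snd_swap, mul_comm (b _)] using shear.prod_symm

lemma tsum_tsum_convolution (ha : Summable a) (hb : Summable b) :
    ∑' k, ∑' l, a (k - l) * b l = (∑' k, a k) * ∑' l, b l := by
  have column_sum (l : G) : ∑' k, a (k - l) * b l = (∑' k, a k) * b l := by
    rw [tsum_mul_right, ← (Equiv.subRight l).tsum_eq a]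
    rfl
  rw [← Summable.tsum_comm (f := fun k l => a (k - l) * b l) (summable_prod_convolution ha hb)]
  simp only [column_sum, tsum_mul_left]

lemma summable_convolution_of_summable_sq (ha : ∀ k, 0 ≤ a k) (hsa : Summable a)
    (hsb : Summable fun l => b l ^ 2) (k : G) : Summable fun l => a (k - l) * b l :=
  summable_mul_of_summable_mul_sq (fun l => ha (k - l)) ((Equiv.subLeft k).summable_iff.2 hsa)
    ((summable_prod_convolution hsa hsb).prod_factor k)

lemma sq_convolution_le (ha : ∀ k, 0 ≤ a k) (hsa : Summable a)
    (hsb : Summable fun l => b l ^ 2) (k : G) :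
    (∑' l, a (k - l) * b l) ^ 2 ≤ (∑' l, a l) * ∑' l, a (k - l) * b l ^ 2 := by
  rw [← (Equiv.subLeft k).tsum_eq a]
  exact sq_tsum_mul_le_tsum_mul_tsum_mul_sq (fun l => ha (k - l))
    ((Equiv.subLeft k).summable_iff.2 hsa) ((summable_prod_convolution hsa hsb).prod_factor k)

lemma summable_sq_convolution (ha : ∀ k, 0 ≤ a k) (hsa : Summable a)
    (hsb : Summable fun l => b l ^ 2) : Summable fun k => (∑' l, a (k - l) * b l) ^ 2 :=
  .of_nonneg_of_le (fun _ => sq_nonneg _) (sq_convolution_le ha hsa hsb)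
    ((summable_prod_convolution hsa hsb).prod.mul_left _)

lemma tsum_sq_convolution_le (ha : ∀ k, 0 ≤ a k) (hsa : Summable a)
    (hsb : Summable fun l => b l ^ 2) :
    ∑' k, (∑' l, a (k - l) * b l) ^ 2 ≤ (∑' k, a k) ^ 2 * ∑' l, b l ^ 2 :=
  calc ∑' k, (∑' l, a (k - l) * b l) ^ 2
      ≤ ∑' k, (∑' l, a l) * ∑' l, a (k - l) * b l ^ 2 :=
        (summable_sq_convolution ha hsa hsb).tsum_le_tsum (sq_convolution_le ha hsa hsb)
          ((summable_prod_convolution hsa hsb).prod.mul_left _)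
    _ = (∑' k, a k) ^ 2 * ∑' l, b l ^ 2 := by
        rw [tsum_mul_left, tsum_tsum_convolution hsa hsb, ← mul_assoc, sq]

end Convolution

section Frequency

/-- The frequency `k ∈ ℤ²` as the complex number `k₁ + i k₂`, so that `knorm k` is its modulus and
the symbols of the two Riesz transforms are `i` times the coordinates of its normalization. -/
def complexFreq (k : Z2) : ℂ := ⟨k.1, k.2⟩

lemma norm_complexFreq (k : Z2) : ‖complexFreq k‖ = knorm k :=
  Complex.norm_eq_sqrt_sq_add_sq _

lemma complexFreq_sub (k l : Z2) : complexFreq (k - l) = complexFreq k - complexFreq l := by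
  apply Complex.ext <;> simp [complexFreq]

lemma knorm_nonneg (k : Z2) : 0 ≤ knorm k := Real.sqrt_nonneg _

lemma knorm_zero : knorm 0 = 0 := by simp [knorm]

lemma knorm_pos {k : Z2} (hk : k ≠ 0) : 0 < knorm k := by
  rw [← norm_complexFreq, norm_pos_iff]
  contrapose! hk
  simpa [complexFreq, Complex.ext_iff, Prod.ext_iff] using hk

lemma norm_vec_le_knorm (k : Z2) : ‖![k.1, k.2]‖ ≤ knorm k := by
  rw [← norm_complexFreq, pi_norm_le_iff_of_nonneg (norm_nonneg _), Fin.forall_fin_two]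
  exact ⟨Complex.abs_re_le_norm (complexFreq k), Complex.abs_im_le_norm (complexFreq k)⟩

lemma summable_knorm_rpow {r : ℝ} (hr : r < -2) : Summable fun k : Z2 => knorm k ^ r := by
  have summable_sup : Summable fun k : Z2 => ‖![k.1, k.2]‖ ^ r := by
    have h := EisensteinSeries.summable_one_div_norm_rpow (k := -r) (by linarith)
    rw [neg_neg] at h
    exact (finTwoArrowEquiv ℤ).symm.summable_iff.2 h
  refine summable_sup.of_nonneg_of_le (fun k => Real.rpow_nonneg (knorm_nonneg k) r) fun k => ?_
  rcases eq_or_ne k 0 with rfl | hk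
  · rw [knorm_zero, Real.zero_rpow (by linarith)]
    positivity
  · refine Real.rpow_le_rpow_of_nonpos ?_ (norm_vec_le_knorm k) (by linarith)
    rw [norm_pos_iff]
    contrapose! hk
    simpa [Prod.ext_iff] using hk

end Frequency

section RieszSymbol

lemma normalize_complexFreq (k : Z2) :
    NormedSpace.normalize (complexFreq k) = ⟨k.1 / knorm k, k.2 / knorm k⟩ := by
  rw [NormedSpace.normalize, norm_complexFreq]
  apply Complex.ext <;> simp [complexFreq, inv_mul_eq_div]

lemma rieszSym_zero_eq (k : Z2) :
    rieszSym 0 k = Complex.I * ((NormedSpace.normalize (complexFreq k)).re : ℂ) := by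
  rcases eq_or_ne k 0 with rfl | hk
  · simp [rieszSym, normalize_complexFreq]
  · simp [rieszSym, hk, normalize_complexFreq, mul_div_assoc]

lemma rieszSym_one_eq (k : Z2) :
    rieszSym 1 k = Complex.I * ((NormedSpace.normalize (complexFreq k)).im : ℂ) := by
  rcases eq_or_ne k 0 with rfl | hk
  · simp [rieszSym, normalize_complexFreq]
  · simp [rieszSym, hk, normalize_complexFreq, mul_div_assoc]

lemma norm_rieszSym_sub_le (j : Fin 2) (k l : Z2) :
    ‖rieszSym j k - rieszSym j l‖
      ≤ ‖NormedSpace.normalize (complexFreq k) - NormedSpace.normalize (complexFreq l)‖ := by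
  fin_cases j
  · simpa [rieszSym_zero_eq, ← mul_sub, ← Complex.ofReal_sub] using
      Complex.abs_re_le_norm
        (NormedSpace.normalize (complexFreq k) - NormedSpace.normalize (complexFreq l))
  · simpa [rieszSym_one_eq, ← mul_sub, ← Complex.ofReal_sub] using
      Complex.abs_im_le_norm
        (NormedSpace.normalize (complexFreq k) - NormedSpace.normalize (complexFreq l))

lemma sqrt_knorm_mul_sqrt_knorm_mul_norm_rieszSym_sub_le (j : Fin 2) (k l : Z2) :
    √(knorm k) * √(knorm l) * ‖rieszSym j k - rieszSym j l‖ ≤ 2 * knorm (k - l) := by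
  have h := sqrt_norm_mul_sqrt_norm_mul_norm_normalize_sub_le (complexFreq k) (complexFreq l)
  rw [← complexFreq_sub] at h
  simp only [norm_complexFreq] at h
  exact (mul_le_mul_of_nonneg_left (norm_rieszSym_sub_le j k l) (by positivity)).trans h

end RieszSymbol

section Commutator

variable {φh θh : Z2 → ℂ}

lemma sqrt_knorm_mul_norm_commutator_term_le (j : Fin 2) (hθ0 : θh 0 = 0) (k l : Z2) :
    √(knorm k) * ‖(rieszSym j k - rieszSym j l) * φh (k - l) * θh l‖
      ≤ 2 * ((knorm (k - l) * ‖φh (k - l)‖) * ((√(knorm l))⁻¹ * ‖θh l‖)) := by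
  rcases eq_or_ne l 0 with rfl | hl
  · simp [hθ0]
  have sqrt_pos : 0 < √(knorm l) := Real.sqrt_pos.2 (knorm_pos hl)
  calc √(knorm k) * ‖(rieszSym j k - rieszSym j l) * φh (k - l) * θh l‖
      = (√(knorm k) * √(knorm l) * ‖rieszSym j k - rieszSym j l‖)
          * (‖φh (k - l)‖ * ((√(knorm l))⁻¹ * ‖θh l‖)) := by
        rw [norm_mul, norm_mul]
        field_simp
    _ ≤ 2 * knorm (k - l) * (‖φh (k - l)‖ * ((√(knorm l))⁻¹ * ‖θh l‖)) :=
        mul_le_mul_of_nonneg_right (sqrt_knorm_mul_sqrt_knorm_mul_norm_rieszSym_sub_le j k l)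
          (by positivity)
    _ = 2 * ((knorm (k - l) * ‖φh (k - l)‖) * ((√(knorm l))⁻¹ * ‖θh l‖)) := by ring

/-- The convolution of `|k| |φ̂(k)|` with `|k|^{-1/2} |θ̂(k)|`. Up to the factor `2` it bounds
`|k|^{1/2}` times the coefficients of the commutator, so that Young's inequality applies. -/
def commMajorant (φh θh : Z2 → ℂ) (k : Z2) : ℝ :=
  ∑' l, (knorm (k - l) * ‖φh (k - l)‖) * ((√(knorm l))⁻¹ * ‖θh l‖)

lemma knorm_mul_norm_nonneg (c : Z2 → ℂ) (k : Z2) : 0 ≤ knorm k * ‖c k‖ :=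
  mul_nonneg (knorm_nonneg k) (norm_nonneg _)

lemma sq_inv_sqrt_knorm_mul (k : Z2) (x : ℝ) :
    ((√(knorm k))⁻¹ * x) ^ 2 = (knorm k)⁻¹ * x ^ 2 := by
  rw [mul_pow, inv_pow, Real.sq_sqrt (knorm_nonneg k)]

lemma summable_sq_inv_sqrt_knorm_mul (hθ : Summable fun k => (knorm k)⁻¹ * ‖θh k‖ ^ 2) :
    Summable fun k => ((√(knorm k))⁻¹ * ‖θh k‖) ^ 2 := by
  simpa only [sq_inv_sqrt_knorm_mul] using hθ

lemma summable_sq_commMajorant (hφ : Summable fun k => knorm k * ‖φh k‖)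
    (hθ : Summable fun k => (knorm k)⁻¹ * ‖θh k‖ ^ 2) :
    Summable fun k => commMajorant φh θh k ^ 2 := by
  have young := summable_sq_convolution (knorm_mul_norm_nonneg φh) hφ
    (summable_sq_inv_sqrt_knorm_mul hθ)
  simpa only [commMajorant] using young

lemma tsum_sq_commMajorant_le (hφ : Summable fun k => knorm k * ‖φh k‖)
    (hθ : Summable fun k => (knorm k)⁻¹ * ‖θh k‖ ^ 2) :
    ∑' k, commMajorant φh θh k ^ 2
      ≤ (∑' k, knorm k * ‖φh k‖) ^ 2 * ∑' k, (knorm k)⁻¹ * ‖θh k‖ ^ 2 := by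
  have young := tsum_sq_convolution_le (knorm_mul_norm_nonneg φh) hφ
    (summable_sq_inv_sqrt_knorm_mul hθ)
  simpa only [commMajorant, sq_inv_sqrt_knorm_mul] using young

lemma sqrt_knorm_mul_norm_commCoeff_le (j : Fin 2) (hθ0 : θh 0 = 0)
    (hφ : Summable fun k => knorm k * ‖φh k‖)
    (hθ : Summable fun k => (knorm k)⁻¹ * ‖θh k‖ ^ 2) (k : Z2) :
    √(knorm k) * ‖commCoeff j φh θh k‖ ≤ 2 * commMajorant φh θh k := by
  have norm_sqrt : ‖(√(knorm k) : ℂ)‖ = √(knorm k) :=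
    Complex.norm_of_nonneg (Real.sqrt_nonneg _)
  have majorant_summable := summable_convolution_of_summable_sq (knorm_mul_norm_nonneg φh) hφ
    (summable_sq_inv_sqrt_knorm_mul hθ) k
  rw [commCoeff, commMajorant, ← norm_sqrt, ← norm_mul, ← tsum_mul_left, ← tsum_mul_left]
  refine tsum_of_norm_bounded (majorant_summable.mul_left 2).hasSum fun l => ?_
  rw [norm_mul, norm_sqrt]
  exact sqrt_knorm_mul_norm_commutator_term_le j hθ0 k l

lemma knorm_mul_sq_norm_commCoeff_le (j : Fin 2) (hθ0 : θh 0 = 0)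
    (hφ : Summable fun k => knorm k * ‖φh k‖)
    (hθ : Summable fun k => (knorm k)⁻¹ * ‖θh k‖ ^ 2) (k : Z2) :
    knorm k * ‖commCoeff j φh θh k‖ ^ 2 ≤ 4 * commMajorant φh θh k ^ 2 :=
  calc knorm k * ‖commCoeff j φh θh k‖ ^ 2 = (√(knorm k) * ‖commCoeff j φh θh k‖) ^ 2 := by
        rw [mul_pow, Real.sq_sqrt (knorm_nonneg k)]
    _ ≤ (2 * commMajorant φh θh k) ^ 2 :=
        pow_le_pow_left₀ (by positivity) (sqrt_knorm_mul_norm_commCoeff_le j hθ0 hφ hθ k) 2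
    _ = 4 * commMajorant φh θh k ^ 2 := by ring

lemma summable_knorm_mul_sq_norm_commCoeff (j : Fin 2) (hθ0 : θh 0 = 0)
    (hφ : Summable fun k => knorm k * ‖φh k‖)
    (hθ : Summable fun k => (knorm k)⁻¹ * ‖θh k‖ ^ 2) :
    Summable fun k => knorm k * ‖commCoeff j φh θh k‖ ^ 2 :=
  .of_nonneg_of_le (fun k => mul_nonneg (knorm_nonneg k) (sq_nonneg _))
    (knorm_mul_sq_norm_commCoeff_le j hθ0 hφ hθ) ((summable_sq_commMajorant hφ hθ).mul_left 4)

lemma sqrt_tsum_knorm_mul_sq_norm_commCoeff_le (j : Fin 2) (hθ0 : θh 0 = 0)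
    (hφ : Summable fun k => knorm k * ‖φh k‖)
    (hθ : Summable fun k => (knorm k)⁻¹ * ‖θh k‖ ^ 2) :
    √(∑' k, knorm k * ‖commCoeff j φh θh k‖ ^ 2)
      ≤ 2 * (∑' k, knorm k * ‖φh k‖) * √(∑' k, (knorm k)⁻¹ * ‖θh k‖ ^ 2) := by
  have constant_nonneg : 0 ≤ 2 * ∑' k, knorm k * ‖φh k‖ :=
    mul_nonneg zero_le_two (tsum_nonneg (knorm_mul_norm_nonneg φh))
  rw [← Real.sqrt_sq constant_nonneg, ← Real.sqrt_mul (sq_nonneg _)]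
  refine Real.sqrt_le_sqrt ?_
  calc ∑' k, knorm k * ‖commCoeff j φh θh k‖ ^ 2
      ≤ ∑' k, 4 * commMajorant φh θh k ^ 2 :=
        (summable_knorm_mul_sq_norm_commCoeff j hθ0 hφ hθ).tsum_le_tsum
          (knorm_mul_sq_norm_commCoeff_le j hθ0 hφ hθ)
          ((summable_sq_commMajorant hφ hθ).mul_left 4)
    _ ≤ 4 * ((∑' k, knorm k * ‖φh k‖) ^ 2 * ∑' k, (knorm k)⁻¹ * ‖θh k‖ ^ 2) := by
        rw [tsum_mul_left]
        gcongr
        exact tsum_sq_commMajorant_le hφ hθ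
    _ = (2 * ∑' k, knorm k * ‖φh k‖) ^ 2 * ∑' k, (knorm k)⁻¹ * ‖θh k‖ ^ 2 := by ring

end Commutator

section SobolevEmbedding

variable {s : ℝ} {φh : Z2 → ℂ}

lemma sq_knorm_rpow_mul (s : ℝ) (k : Z2) (x : ℝ) :
    (knorm k ^ s * x) ^ 2 = knorm k ^ (2 * s) * x ^ 2 := by
  rw [mul_pow, mul_comm 2 s]
  exact congrArg (· * x ^ 2) (Real.rpow_mul_natCast (knorm_nonneg k) s 2).symm

lemma knorm_rpow_one_sub_mul (s : ℝ) (k : Z2) (x : ℝ) :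
    knorm k ^ (1 - s) * (knorm k ^ s * x) = knorm k * x := by
  rw [← mul_assoc, ← Real.rpow_add' (knorm_nonneg k) (by simp), sub_add_cancel, Real.rpow_one]

lemma summable_sq_knorm_rpow_one_sub (hs : 2 < s) :
    Summable fun k : Z2 => (knorm k ^ (1 - s)) ^ 2 := by
  refine (summable_knorm_rpow (r := 2 * (1 - s)) (by linarith)).congr fun k => ?_
  simpa using (sq_knorm_rpow_mul (1 - s) k 1).symm

lemma summable_knorm_mul_norm (hs : 2 < s)
    (hφ : Summable fun k => knorm k ^ (2 * s) * ‖φh k‖ ^ 2) :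
    Summable fun k => knorm k * ‖φh k‖ := by
  simpa only [knorm_rpow_one_sub_mul] using
    summable_mul_of_summable_sq (g := fun k => knorm k ^ s * ‖φh k‖)
      (summable_sq_knorm_rpow_one_sub hs) (by simpa only [sq_knorm_rpow_mul] using hφ)

lemma tsum_knorm_mul_norm_le (hs : 2 < s)
    (hφ : Summable fun k => knorm k ^ (2 * s) * ‖φh k‖ ^ 2) :
    ∑' k, knorm k * ‖φh k‖
      ≤ √(∑' k : Z2, (knorm k ^ (1 - s)) ^ 2) * √(∑' k, knorm k ^ (2 * s) * ‖φh k‖ ^ 2) := by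
  have cauchy_schwarz := abs_tsum_mul_le_sqrt_mul_sqrt (g := fun k => knorm k ^ s * ‖φh k‖)
    (summable_sq_knorm_rpow_one_sub hs) (by simpa only [sq_knorm_rpow_mul] using hφ)
  simp only [knorm_rpow_one_sub_mul, sq_knorm_rpow_mul] at cauchy_schwarz
  exact (le_abs_self _).trans cauchy_schwarz

lemma summable_knorm_pow_mul_sq_norm {n : ℕ}
    (hφ : Summable fun k => (1 + knorm k) ^ n * ‖φh k‖ ^ 2) :
    Summable fun k => knorm k ^ n * ‖φh k‖ ^ 2 := by
  refine hφ.of_nonneg_of_le (fun k => ?_) fun k => ?_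
  · exact mul_nonneg (pow_nonneg (knorm_nonneg k) n) (sq_nonneg _)
  · have := knorm_nonneg k
    gcongr
    linarith

end SobolevEmbedding

theorem stmt16_general (j : Fin 2) {s : ℝ} (hs : 2 < s) : ∃ C : ℝ, ∀ φh θh : Z2 → ℂ,
    θh 0 = 0 →
    Summable (fun k : Z2 => knorm k ^ (2 * s) * ‖φh k‖ ^ 2) →
    Summable (fun k : Z2 => (knorm k)⁻¹ * ‖θh k‖ ^ 2) →
    Summable (fun k : Z2 => knorm k * ‖commCoeff j φh θh k‖ ^ 2) ∧
    √(∑' k : Z2, knorm k * ‖commCoeff j φh θh k‖ ^ 2)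
      ≤ C * √(∑' k : Z2, knorm k ^ (2 * s) * ‖φh k‖ ^ 2)
          * √(∑' k : Z2, (knorm k)⁻¹ * ‖θh k‖ ^ 2) := by
  refine ⟨2 * √(∑' k : Z2, (knorm k ^ (1 - s)) ^ 2), fun φh θh hθ0 hφ hθ => ?_⟩
  have hφ₁ := summable_knorm_mul_norm hs hφ
  refine ⟨summable_knorm_mul_sq_norm_commCoeff j hθ0 hφ₁ hθ,
    (sqrt_tsum_knorm_mul_sq_norm_commCoeff_le j hθ0 hφ₁ hθ).trans ?_⟩
  rw [mul_assoc 2 √_]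
  gcongr
  exact tsum_knorm_mul_norm_le hs hφ

/-- Proposition B.1: for `φ ∈ H³` and mean-zero `θ ∈ Ḣ^{-1/2}`, the commutator
`[R_j, φ]θ` lies in `Ḣ^{1/2}` with `‖[R_j,φ]θ‖_{Ḣ^{1/2}} ≤ C ‖φ‖_{Ḣ³} ‖θ‖_{Ḣ^{-1/2}}`.
Everything is expressed via Fourier coefficients: `φh = φ̂`, `θh = θ̂`, and the commutator
has coefficients `commCoeff j φh θh`. -/
theorem stmt16 (j : Fin 2) : ∃ C : ℝ, ∀ φh θh : Z2 → ℂ,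
    θh 0 = 0 →
    Summable (fun k : Z2 => (1 + knorm k) ^ (6 : ℕ) * ‖φh k‖ ^ 2) →
    Summable (fun k : Z2 => (knorm k)⁻¹ * ‖θh k‖ ^ 2) →
    Summable (fun k : Z2 => knorm k * ‖commCoeff j φh θh k‖ ^ 2) ∧
    Real.sqrt (∑' k : Z2, knorm k * ‖commCoeff j φh θh k‖ ^ 2)
      ≤ C * Real.sqrt (∑' k : Z2, knorm k ^ (6 : ℕ) * ‖φh k‖ ^ 2)
          * Real.sqrt (∑' k : Z2, (knorm k)⁻¹ * ‖θh k‖ ^ 2) := by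
  obtain ⟨C, hC⟩ := stmt16_general j (s := 3) (by norm_num)
  simp only [show (2 * 3 : ℝ) = (6 : ℕ) by norm_num, Real.rpow_natCast] at hC
  exact ⟨C, fun φh θh hθ0 hφ => hC φh θh hθ0 (summable_knorm_pow_mul_sq_norm hφ)⟩

end
end
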